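/- arXiv:2505.21989 — 3 statements merged into one kernel-verified Lean document; each statement's English description precedes it below -/
import Mathlib

section
/- Let k ≥ 2 be an integer and let r with 1 ≤ r ≤ k−1 be a quadratic nonresidue modulo k (i.e., there is no integer m with m² ≡ r (mod k)). Then for all integers n ≥ 0, the number of (4,9)-regular overpartitions satisfies R̄_{4,9}(4(kn+r)) ≡ 0 (mod 24). -/
/-- Number of partitions of `a` with no part divisible by `ℓ` or `μ`
(the non-overlined parts of an `(ℓ,μ)`-regular overpartition). -/
def regularCount (ℓ μ a : ℕ) : ℕ :=
  Fintype.card {p : a.Partition // ∀ i ∈ p.parts, ¬ ℓ ∣ i ∧ ¬ μ ∣ i}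

/-- Number of partitions of `a` into distinct parts with no part divisible by `ℓ` or `μ`
(the overlined parts of an `(ℓ,μ)`-regular overpartition). -/
def regularDistinctCount (ℓ μ a : ℕ) : ℕ :=
  Fintype.card {p : a.Partition // p.parts.Nodup ∧ ∀ i ∈ p.parts, ¬ ℓ ∣ i ∧ ¬ μ ∣ i}

/-- `Rbar ℓ μ n` is the number of `(ℓ,μ)`-regular overpartitions of `n`: pairs `(λ, δ)`
where `λ` is a partition, `δ` is a partition into distinct parts, `|λ| + |δ| = n`,
and no part of `λ` or `δ` is divisible by `ℓ` or by `μ`. -/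
def Rbar (ℓ μ n : ℕ) : ℕ :=
  ∑ ab ∈ Finset.HasAntidiagonal.antidiagonal n, regularCount ℓ μ ab.1 * regularDistinctCount ℓ μ ab.2

/-!
Write `φ(q) = ∑ q ^ (n ^ 2)` over all integers `n` and `φ₋(q) = φ(-q)`. Gauss's identity
`φ₋(q) = ∏ (1 - q ^ n) / (1 + q ^ n)` turns the generating function of the overpartitions with no
part divisible by `ℓ` or `μ`, for coprime `ℓ` and `μ`, into the theta quotient
`φ₋(q ^ ℓ) φ₋(q ^ μ) / (φ₋(q) φ₋(q ^ (ℓ μ)))`. For `ℓ = 4` and `μ = 9`, the identity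
`φ₋(q ^ 4) ^ 4 = φ₋(q) φ(q) φ(q ^ 2) ^ 2` clears the denominator up to series in `q ^ 4`, so that
the terms with exponent divisible by `4` can be read off from `φ(q) = φ(q ^ 4) + 2 q ψ(q ^ 8)`,
where `ψ(q) = ∑ q ^ (t (t + 1) / 2)`. Over any commutative ring the result is
`∑ R̄(4 n) q ^ n = (φ(q ^ 9) φ(q) ^ 3 - 16 q ^ 3 ψ(q ^ 18) ψ(q ^ 2) ^ 3) / (φ₋(q ^ 9) φ₋(q) ^ 3)`.

Modulo `3` the right-hand side is `1`, by the cube of Jacobi's identity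
`φ₋(q) ^ 4 = φ(q) ^ 4 - 16 q ψ(q ^ 2) ^ 4`. Modulo `8` it is `1 + 4 (O(q) + O(q ^ 9))`, where
`O(q) = q ψ(q ^ 8)` is the sum of `q ^ (m ^ 2)` over the positive odd `m`. Hence, for `N > 0`,
`24 ∣ R̄(4 N)` unless `N` is the square of an integer coprime to `6`; and `k n + r` is not a square
when `r` is a nonresidue modulo `k`.
-/

open PowerSeries Finset Filter
open scoped PowerSeries.WithPiTopology

/-! ### The operators `V` and `U` on power series -/

local notation "V[" m "]" => expand m (NeZero.ne m)

/-- Atkin's operator `U_m : ∑ a(n) q ^ n ↦ ∑ a(m n) q ^ n`, which extracts the terms whose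
exponent is divisible by `m`; it is a left inverse of `expand m`. -/
noncomputable def atkinU {R : Type*} [Semiring R] (m : ℕ) : R⟦X⟧ →ₗ[R] R⟦X⟧ where
  toFun f := PowerSeries.mk fun n ↦ coeff (m * n) f
  map_add' f g := by ext; simp
  map_smul' c f := by ext; simp

@[simp]
theorem coeff_atkinU {R : Type*} [Semiring R] (m n : ℕ) (f : R⟦X⟧) :
    coeff n (atkinU m f) = coeff (m * n) f := by
  simp [atkinU]

section Operators

variable {R : Type*} [CommRing R]

theorem expand_expand {m n k : ℕ} [NeZero m] [NeZero n] [NeZero k] (h : m * n = k) (f : R⟦X⟧) :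
    V[m] (V[n] f) = V[k] f := by
  subst h
  exact (expand_mul m _ n _ f).symm

theorem expand_injective (m : ℕ) [NeZero m] : Function.Injective (V[m] : R⟦X⟧ → R⟦X⟧) := by
  intro f g h
  ext n
  rw [← coeff_expand_mul m (NeZero.ne m) f, h, coeff_expand_mul]

theorem rescale_expand (c : R) (m : ℕ) [NeZero m] (f : R⟦X⟧) :
    rescale c (V[m] f) = V[m] (rescale (c ^ m) f) := by
  ext n
  rw [coeff_rescale, coeff_expand, coeff_expand]
  split_ifs with h
  · obtain ⟨k, rfl⟩ := h
    rw [Nat.mul_div_cancel_left k (NeZero.pos m), coeff_rescale, pow_mul]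
  · rw [mul_zero]

theorem expand_eq_pow (p : ℕ) [Fact p.Prime] (f : (ZMod p)⟦X⟧) : V[p] f = f ^ p := by
  have h := MvPowerSeries.map_frobenius_expand (σ := Unit) p (NeZero.ne p) (f := f)
  rwa [ZMod.frobenius_zmod, MvPowerSeries.map_id] at h

theorem atkinU_mul_expand (m : ℕ) [NeZero m] (f g : R⟦X⟧) :
    atkinU m (f * V[m] g) = atkinU m f * g := by
  ext n
  rw [coeff_atkinU, coeff_mul, coeff_mul]
  symm
  refine sum_of_injOn (fun p ↦ (m * p.1, m * p.2)) ?_ ?_ ?_ ?_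
  · intro p _ q _ h
    simpa [Prod.ext_iff, NeZero.ne m] using h
  · intro p hp
    rw [mem_coe, HasAntidiagonal.mem_antidiagonal] at hp ⊢
    rw [← mul_add, hp]
  · intro p hp hp'
    have hdvd : ¬ m ∣ p.2 := by
      rintro ⟨j, hj⟩
      obtain ⟨i, hi⟩ : m ∣ p.1 := by
        rw [Nat.dvd_add_iff_left ⟨j, hj⟩, HasAntidiagonal.mem_antidiagonal.1 hp]
        exact dvd_mul_right m n
      refine hp' ⟨(i, j), ?_, by simp [← hi, ← hj]⟩
      rw [mem_coe, HasAntidiagonal.mem_antidiagonal]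
      refine Nat.eq_of_mul_eq_mul_left (NeZero.pos m) ?_
      rw [mul_add, ← hi, ← hj, HasAntidiagonal.mem_antidiagonal.1 hp]
    rw [coeff_expand_of_not_dvd _ _ _ hdvd, mul_zero]
  · intro p _
    rw [coeff_atkinU, coeff_expand_mul]

theorem atkinU_expand (m : ℕ) [NeZero m] (f : R⟦X⟧) : atkinU m (V[m] f) = f := by
  ext n
  rw [coeff_atkinU, coeff_expand_mul]

theorem atkinU_X_pow_mul_expand {m i : ℕ} [NeZero m] (h : ¬ m ∣ i) (f : R⟦X⟧) :
    atkinU m (X ^ i * V[m] f) = 0 := by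
  have hX : atkinU m (X ^ i : R⟦X⟧) = 0 := by
    ext n
    rw [coeff_atkinU, coeff_X_pow, if_neg, map_zero]
    exact fun hn ↦ h ⟨n, hn.symm⟩
  rw [atkinU_mul_expand, hX, zero_mul]

end Operators

theorem continuous_expand {R : Type*} [CommRing R] [TopologicalSpace R] (m : ℕ) [NeZero m] :
    Continuous (V[m] : R⟦X⟧ → R⟦X⟧) := by
  refine continuous_iff_continuousAt.2 fun f ↦ ?_
  rw [ContinuousAt, WithPiTopology.tendsto_iff_coeff_tendsto]
  intro d
  simp only [coeff_expand]
  split_ifs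
  · exact (WithPiTopology.continuous_coeff R _).continuousAt
  · exact tendsto_const_nhds

theorem continuous_rescale {R : Type*} [CommSemiring R] [TopologicalSpace R]
    [IsTopologicalSemiring R] (c : R) : Continuous (rescale c) := by
  refine continuous_iff_continuousAt.2 fun f ↦ ?_
  rw [ContinuousAt, WithPiTopology.tendsto_iff_coeff_tendsto]
  intro d
  simp only [coeff_rescale]
  exact ((WithPiTopology.continuous_coeff R d).const_mul (c ^ d)).continuousAt

theorem hasProd_ite_dvd {M : Type*} [CommMonoid M] [TopologicalSpace M] (m : ℕ) [NeZero m]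
    {f : ℕ → M} {a : M} (h : HasProd (fun i ↦ f (m * (i + 1))) a) :
    HasProd (fun i ↦ if m ∣ i + 1 then f (i + 1) else 1) a := by
  have hpos (i : ℕ) : 0 < m * (i + 1) := Nat.mul_pos (NeZero.pos m) i.succ_pos
  have hinj : Function.Injective fun i ↦ m * (i + 1) - 1 := by
    intro i j hij
    have : m * (i + 1) = m * (j + 1) := by grind
    exact Nat.succ_injective (Nat.eq_of_mul_eq_mul_left (NeZero.pos m) this)
  refine (hinj.hasProd_iff ?_).1 ?_
  · intro x hx
    refine if_neg ?_
    rintro ⟨_ | k, hk⟩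
    · simp at hk
    · exact hx ⟨k, by grind⟩
  · simpa [Function.comp_def, Nat.sub_add_cancel (hpos _)] using h

theorem isSquare_sq_mul_iff {m k : ℕ} (hm : m ≠ 0) : IsSquare (m ^ 2 * k) ↔ IsSquare k := by
  refine ⟨?_, fun h ↦ (IsSquare.sq m).mul h⟩
  rintro ⟨t, ht⟩
  obtain ⟨s, rfl⟩ : m ∣ t := (Nat.pow_dvd_pow_iff two_ne_zero).1 ⟨k, by rw [ht, sq]⟩
  refine ⟨s, Nat.eq_of_mul_eq_mul_left (pow_pos (Nat.pos_of_ne_zero hm) 2) ?_⟩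
  rw [ht]
  ring

/-! ### Theta series -/

/-- The series `∑ q ^ (n ^ 2)`, summed over the positive integers `n`. -/
def squareSeries {R : Type*} [Semiring R] : R⟦X⟧ :=
  PowerSeries.mk fun n ↦ if n ≠ 0 ∧ IsSquare n then 1 else 0

/-- Ramanujan's theta series `φ(q) = ∑ q ^ (n ^ 2)`, summed over all integers `n`. The series
`φ(-q)` is `rescale (-1) ramanujanPhi`. -/
noncomputable def ramanujanPhi {R : Type*} [Semiring R] : R⟦X⟧ := 1 + 2 * squareSeries

/-- Ramanujan's theta series `ψ(q) = ∑ q ^ (t (t + 1) / 2)`, summed over the natural numbers `t`;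
the triangular numbers are the `n` for which `8 n + 1` is a square. -/
def ramanujanPsi {R : Type*} [Semiring R] : R⟦X⟧ :=
  PowerSeries.mk fun n ↦ if IsSquare (8 * n + 1) then 1 else 0

local notation "φ" => ramanujanPhi
local notation "φ₋" => rescale (-1) ramanujanPhi
local notation "ψ" => ramanujanPsi

theorem hasSum_X_pow_sq {R : Type*} [Semiring R] [TopologicalSpace R] :
    HasSum (fun s : ℕ ↦ (X : R⟦X⟧) ^ ((s + 1) ^ 2)) squareSeries := by
  rw [WithPiTopology.hasSum_iff_hasSum_coeff]
  intro d
  simp only [coeff_X_pow, squareSeries, coeff_mk]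
  split_ifs with h
  · obtain ⟨hd, t, rfl⟩ := h
    obtain ⟨t, rfl⟩ : ∃ s, t = s + 1 := Nat.exists_eq_succ_of_ne_zero (by grind)
    convert! hasSum_ite_eq t (1 : R) using 3 with s
    rw [← sq, Nat.pow_left_injective two_ne_zero |>.eq_iff]
    grind
  · convert! hasSum_zero with s
    rw [if_neg]
    rintro rfl
    exact h ⟨by positivity, s + 1, sq _⟩

section Dissection

variable {R : Type*} [CommRing R]

theorem coeff_X_mul_expand_ramanujanPsi (n : ℕ) :
    coeff n (X * V[8] ψ : R⟦X⟧) = if IsSquare n ∧ Odd n then 1 else 0 := by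
  rcases n with _ | n
  · simp
  have h8 (h : IsSquare (n + 1) ∧ Odd (n + 1)) : 8 ∣ n := by
    obtain ⟨⟨t, ht⟩, hodd⟩ := h
    have ht_odd : Odd t := Nat.Odd.of_mul_left (ht ▸ hodd)
    simpa [sq, ← ht] using Nat.eight_dvd_sq_sub_one_of_odd ht_odd
  rw [coeff_succ_X_mul, coeff_expand]
  split_ifs with h h' h'
  · obtain ⟨k, rfl⟩ := h
    simp [ramanujanPsi, h'.1]
  · obtain ⟨k, rfl⟩ := h
    have : ¬ IsSquare (8 * k + 1) := fun hsq ↦ h' ⟨hsq, by grind⟩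
    simp [ramanujanPsi, this]
  · exact absurd (h8 h') h
  · rfl

theorem squareSeries_eq_expand_add :
    (squareSeries : R⟦X⟧) = V[4] squareSeries + X * V[8] ψ := by
  ext n
  rw [map_add, coeff_X_mul_expand_ramanujanPsi, coeff_expand]
  simp only [squareSeries, coeff_mk]
  by_cases h4 : 4 ∣ n
  · obtain ⟨k, rfl⟩ := h4
    have hodd : ¬ Odd (4 * k) := Nat.not_odd_iff_even.2 (by grind)
    have hsq : IsSquare (4 * k) ↔ IsSquare k := isSquare_sq_mul_iff two_ne_zero
    simp [hodd, hsq]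
  · have hodd : IsSquare n → Odd n := by
      rintro ⟨t, rfl⟩
      rw [← Nat.not_even_iff_odd, Nat.even_mul, or_self]
      exact fun h ↦ h4 (mul_dvd_mul h.two_dvd h.two_dvd)
    have hne : n ≠ 0 := by grind
    simp only [h4, hne, if_false, zero_add, ne_eq, not_false_eq_true, true_and]
    exact if_congr ⟨fun h ↦ ⟨h, hodd h⟩, And.left⟩ rfl rfl

theorem ramanujanPhi_eq_expand_add : (φ : R⟦X⟧) = V[4] φ + 2 * X * V[8] ψ := by
  rw [ramanujanPhi, map_add, map_one, map_mul, map_ofNat]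
  nth_rw 1 [squareSeries_eq_expand_add]
  ring

end Dissection

section ShanksIdentity

variable {R : Type*} [CommRing R]

/-- The error term in Shanks's finite form of Gauss's identity. -/
def shanksRemainder (x : R) (n : ℕ) : R :=
  ∑ s ∈ range n, (-1) ^ (s + 1) * x ^ ((s + 1) * (n + 1)) *
    ((∏ j ∈ Ico (s + 1) n, (1 - x ^ (j + 1))) * ∏ j ∈ range s, (1 + x ^ (j + 1)))

theorem pow_succ_dvd_shanksRemainder (x : R) (n : ℕ) : x ^ (n + 1) ∣ shanksRemainder x n :=
  dvd_sum fun s _ ↦ ((pow_dvd_pow x (Nat.le_mul_of_pos_left _ s.succ_pos)).mul_left _).mul_right _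

theorem shanksRemainder_succ (x : R) (n : ℕ) :
    shanksRemainder x (n + 1) = (1 + x ^ (n + 1)) * shanksRemainder x n +
      x ^ (n + 1) * ∏ j ∈ range n, (1 - x ^ (j + 1)) +
      (-1) ^ (n + 1) * x ^ ((n + 1) ^ 2) * ∏ j ∈ range (n + 1), (1 + x ^ (j + 1)) := by
  let g (s : ℕ) : R := (-1) ^ s * x ^ ((s + 1) * (n + 1)) *
    ((∏ j ∈ Ico s n, (1 - x ^ (j + 1))) * ∏ j ∈ range s, (1 + x ^ (j + 1)))
  have hsum : ∑ s ∈ range n, (-1) ^ (s + 1) * x ^ ((s + 1) * (n + 1 + 1)) *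
      ((∏ j ∈ Ico (s + 1) (n + 1), (1 - x ^ (j + 1))) * ∏ j ∈ range s, (1 + x ^ (j + 1))) =
      (1 + x ^ (n + 1)) * shanksRemainder x n + (g 0 - g n) := by
    rw [shanksRemainder, mul_sum, ← sum_range_sub', ← sum_add_distrib]
    refine sum_congr rfl fun s hs ↦ ?_
    have hs : s < n := mem_range.1 hs
    simp only [g]
    rw [prod_Ico_succ_top (Nat.succ_le_of_lt hs), prod_eq_prod_Ico_succ_bot hs, prod_range_succ]
    ring
  have hg_zero : g 0 = x ^ (n + 1) * ∏ j ∈ range n, (1 - x ^ (j + 1)) := by simp [g]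
  have hg_self : g n = (-1) ^ n * x ^ ((n + 1) ^ 2) * ∏ j ∈ range n, (1 + x ^ (j + 1)) := by
    simp [g, sq]
  rw [shanksRemainder, sum_range_succ, hsum, hg_zero, hg_self, Ico_self, prod_empty,
    prod_range_succ _ n]
  ring

theorem prod_one_add_mul_sum_eq (x : R) (n : ℕ) :
    (∏ j ∈ range n, (1 + x ^ (j + 1))) *
        (1 + 2 * ∑ s ∈ range n, (-1) ^ (s + 1) * x ^ ((s + 1) ^ 2)) =
      (∏ j ∈ range n, (1 - x ^ (j + 1))) + 2 * shanksRemainder x n := by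
  induction n with
  | zero => simp [shanksRemainder]
  | succ n ih =>
    rw [shanksRemainder_succ, sum_range_succ, prod_range_succ, prod_range_succ]
    linear_combination (1 + x ^ (n + 1)) * ih

end ShanksIdentity

section Gauss

variable {R : Type*} [CommRing R]

theorem isUnit_rescale_ramanujanPhi (c : R) : IsUnit (rescale c φ) := by
  rw [isUnit_iff_constantCoeff, ← coeff_zero_eq_constantCoeff_apply, coeff_rescale]
  simp [ramanujanPhi, squareSeries]

section Products

variable [TopologicalSpace R]

/-- The `q`-Pochhammer symbol `(c q; q)_∞`. -/
noncomputable def qPochhammer (c : R) : R⟦X⟧ := ∏' i : ℕ, (1 - C c * X ^ (i + 1))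

theorem hasProd_qPochhammer (c : R) :
    HasProd (fun i : ℕ ↦ 1 - C c * X ^ (i + 1)) (qPochhammer c) := by
  refine Multipliable.hasProd ?_
  simp_rw [sub_eq_add_neg]
  refine WithPiTopology.multipliable_one_add_of_tendsto_order_atTop_nhds_top _ ?_
  refine ENat.tendsto_nhds_top_iff_natCast_lt.2 fun n ↦ eventually_atTop.2 ⟨n, fun i hi ↦ ?_⟩
  refine (Nat.cast_lt.2 (Nat.lt_succ_of_le hi)).trans_le (nat_le_order _ _ fun d hd ↦ ?_)
  rw [map_neg, coeff_C_mul, coeff_X_pow, if_neg hd.ne, mul_zero, neg_zero]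

theorem constantCoeff_qPochhammer [T2Space R] (c : R) : constantCoeff (qPochhammer c) = 1 := by
  have h := (hasProd_qPochhammer c).map constantCoeff (WithPiTopology.continuous_constantCoeff R)
  refine h.unique ?_
  simp [Function.comp_def, hasProd_one]

theorem isUnit_qPochhammer [T2Space R] (c : R) : IsUnit (qPochhammer c) := by
  rw [isUnit_iff_constantCoeff, constantCoeff_qPochhammer]
  exact isUnit_one

theorem hasProd_expand_qPochhammer (m : ℕ) [NeZero m] (c : R) :
    HasProd (fun i ↦ if m ∣ i + 1 then 1 - C c * X ^ (i + 1) else 1) (V[m] (qPochhammer c)) := by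
  have h := (hasProd_qPochhammer c).map (V[m] : R⟦X⟧ →ₐ[R] R⟦X⟧) (continuous_expand m)
  refine hasProd_ite_dvd m (f := fun i ↦ 1 - C c * X ^ i) ?_
  simpa [Function.comp_def, expand_C, pow_mul] using h

variable [IsTopologicalRing R]

theorem tendsto_ramanujanPhi_neg :
    Tendsto (fun n ↦ 1 + 2 * ∑ s ∈ range n, (-1) ^ (s + 1) * (X : R⟦X⟧) ^ ((s + 1) ^ 2)) atTop
      (nhds φ₋) := by
  have hsum := (hasSum_X_pow_sq (R := R)).map (rescale (-1)) (continuous_rescale (-1))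
  have hterm (s : ℕ) : rescale (-1) ((X : R⟦X⟧) ^ ((s + 1) ^ 2)) =
      (-1) ^ (s + 1) * X ^ ((s + 1) ^ 2) := by
    rw [map_pow, rescale_neg_one_X, neg_pow]
    congr 1
    rcases Nat.even_or_odd (s + 1) with h | h
    · rw [h.neg_one_pow, (h.pow_of_ne_zero two_ne_zero).neg_one_pow]
    · rw [h.neg_one_pow, h.pow.neg_one_pow]
  have hphi : φ₋ = 1 + 2 * rescale (-1) (squareSeries : R⟦X⟧) := by
    rw [ramanujanPhi, map_add, map_one, map_mul, map_ofNat]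
  rw [hphi]
  simpa only [Function.comp_apply, hterm] using (hsum.tendsto_sum_nat.const_mul 2).const_add 1

theorem hasProd_rescale_neg_one_qPochhammer (c : R) :
    HasProd (fun i ↦ 1 - C (c * (-1) ^ (i + 1)) * X ^ (i + 1))
      (rescale (-1) (qPochhammer c)) := by
  have h := (hasProd_qPochhammer c).map (rescale (-1)) (continuous_rescale (-1))
  have hC : rescale (-1) (C c) = C c := by
    ext n
    rcases eq_or_ne n 0 with rfl | hn <;> simp [coeff_rescale, coeff_C, *]
  simpa [Function.comp_def, hC, neg_pow (X : R⟦X⟧), mul_assoc] using h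

variable [T2Space R]

theorem qPochhammer_neg_one_mul_ramanujanPhi :
    qPochhammer (-1 : R) * φ₋ = qPochhammer 1 := by
  have hadd := (hasProd_qPochhammer (-1 : R)).tendsto_prod_nat
  have hsub := (hasProd_qPochhammer (1 : R)).tendsto_prod_nat
  simp only [map_neg, map_one, neg_mul, one_mul, sub_neg_eq_add] at hadd hsub
  have hrem : Tendsto (fun n ↦ 2 * shanksRemainder (X : R⟦X⟧) n) atTop (nhds 0) := by
    rw [WithPiTopology.tendsto_iff_coeff_tendsto]
    refine fun d ↦ tendsto_atTop_of_eventually_const (i₀ := d) fun n hn ↦ ?_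
    have hdvd := (pow_succ_dvd_shanksRemainder (X : R⟦X⟧) n).mul_left 2
    rw [map_zero, X_pow_dvd_iff.1 hdvd d (Nat.lt_succ_of_le hn)]
  have hlhs := hadd.mul tendsto_ramanujanPhi_neg
  have hrhs := hsub.add hrem
  simp only [prod_one_add_mul_sum_eq, add_zero] at hlhs hrhs
  exact tendsto_nhds_unique hlhs hrhs

end Products

theorem ramanujanPhi_mul_rescale_neg_one : (φ : R⟦X⟧) * φ₋ = V[2] φ₋ ^ 2 := by
  let _ : TopologicalSpace R := ⊥
  have : DiscreteTopology R := ⟨rfl⟩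
  let E : R⟦X⟧ := qPochhammer 1
  let D : R⟦X⟧ := qPochhammer (-1)
  have hprod : E * rescale (-1) E * V[2] D ^ 2 = D * rescale (-1) D * V[2] E ^ 2 := by
    have hlhs := ((hasProd_qPochhammer (1 : R)).mul (hasProd_rescale_neg_one_qPochhammer 1)).mul
      ((hasProd_expand_qPochhammer 2 (-1 : R)).mul (hasProd_expand_qPochhammer 2 (-1)))
    have hrhs := ((hasProd_qPochhammer (-1 : R)).mul (hasProd_rescale_neg_one_qPochhammer (-1))).mul
      ((hasProd_expand_qPochhammer 2 (1 : R)).mul (hasProd_expand_qPochhammer 2 1))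
    rw [sq, sq]
    refine hlhs.unique ?_
    convert! hrhs using 2 with i
    rcases Nat.even_or_odd (i + 1) with h | h
    · simp only [if_pos h.two_dvd, h.neg_one_pow, map_mul, map_neg, map_one]
      ring
    · simp only [if_neg h.not_two_dvd_nat, h.neg_one_pow, map_mul, map_neg, map_one]
      ring
  have hgauss : D * φ₋ = E := qPochhammer_neg_one_mul_ramanujanPhi
  have hneg : rescale (-1) D * φ = rescale (-1) E := by
    rw [← hgauss, map_mul, rescale_rescale, neg_one_mul, neg_neg, rescale_one, RingHom.id_apply]
  have hdbl : V[2] D * V[2] φ₋ = V[2] E := by rw [← hgauss, map_mul]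
  have hD : IsUnit D := isUnit_qPochhammer (-1)
  have hunit : IsUnit (D * rescale (-1) D * V[2] D ^ 2) :=
    (hD.mul (hD.map _)).mul ((hD.map _).pow 2)
  refine hunit.mul_left_cancel ?_
  rw [← hdbl, ← hneg, ← hgauss] at hprod
  linear_combination hprod

end Gauss

section Jacobi

variable {R : Type*} [CommRing R]

theorem rescale_neg_one_ramanujanPhi_eq_expand_sub :
    (φ₋ : R⟦X⟧) = V[4] φ - 2 * X * V[8] ψ := by
  have h := congrArg (rescale (-1)) (ramanujanPhi_eq_expand_add (R := R))
  simp only [map_add, map_mul, map_ofNat, rescale_neg_one_X, rescale_expand,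
    (by decide : Even 4).neg_one_pow, (by decide : Even 8).neg_one_pow, rescale_one,
    RingHom.id_apply] at h
  linear_combination h

theorem rescale_neg_one_ramanujanPhi_sq :
    (φ₋ : R⟦X⟧) ^ 2 = V[2] φ ^ 2 - 4 * X * V[4] ψ ^ 2 := by
  refine expand_injective 2 ?_
  simp only [map_sub, map_mul, map_pow, map_ofNat, expand_X]
  rw [expand_expand (k := 4) rfl, expand_expand (k := 8) rfl, ← ramanujanPhi_mul_rescale_neg_one]
  linear_combination φ₋ * ramanujanPhi_eq_expand_add (R := R) +
    (V[4] φ + 2 * X * V[8] ψ) * rescale_neg_one_ramanujanPhi_eq_expand_sub (R := R)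

theorem ramanujanPhi_sq : (φ : R⟦X⟧) ^ 2 = V[2] φ ^ 2 + 4 * X * V[4] ψ ^ 2 := by
  have h := congrArg (rescale (-1)) (rescale_neg_one_ramanujanPhi_sq (R := R))
  simp only [map_sub, map_mul, map_pow, map_ofNat, rescale_neg_one_X, rescale_rescale,
    rescale_expand, even_two.neg_one_pow, (by decide : Even 4).neg_one_pow, neg_mul_neg, mul_one,
    rescale_one, RingHom.id_apply] at h
  linear_combination h

theorem expand_four_rescale_neg_one_ramanujanPhi_pow_four :
    (V[4] φ₋ : R⟦X⟧) ^ 4 = φ₋ * (φ * V[2] φ ^ 2) := by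
  have h := congrArg V[2] (ramanujanPhi_mul_rescale_neg_one (R := R))
  rw [map_mul, map_pow, expand_expand (k := 4) rfl] at h
  calc (V[4] φ₋ : R⟦X⟧) ^ 4 = (V[2] φ * V[2] φ₋) ^ 2 := by rw [h]; ring
    _ = φ₋ * (φ * V[2] φ ^ 2) := by
      rw [mul_pow, ← ramanujanPhi_mul_rescale_neg_one]; ring

theorem expand_two_ramanujanPhi_sq :
    (V[2] φ : R⟦X⟧) ^ 2 = V[4] φ ^ 2 + (2 * X * V[8] ψ) ^ 2 := by
  have h := congrArg V[2] (ramanujanPhi_sq (R := R))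
  simp only [map_add, map_mul, map_pow, map_ofNat, expand_X] at h
  rw [expand_expand (k := 4) rfl, expand_expand (k := 8) rfl] at h
  linear_combination h

theorem rescale_neg_one_ramanujanPhi_pow_four :
    (φ₋ : R⟦X⟧) ^ 4 = φ ^ 4 - 16 * X * V[2] ψ ^ 4 := by
  refine expand_injective 4 ?_
  rw [map_pow, expand_four_rescale_neg_one_ramanujanPhi_pow_four, expand_two_ramanujanPhi_sq]
  simp only [map_sub, map_mul, map_pow, map_ofNat, expand_X]
  rw [expand_expand (k := 8) rfl]
  linear_combination
    φ * (V[4] φ ^ 2 + (2 * X * V[8] ψ) ^ 2) * rescale_neg_one_ramanujanPhi_eq_expand_sub (R := R) +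
    (V[4] φ - 2 * X * V[8] ψ) * (V[4] φ ^ 2 + (2 * X * V[8] ψ) ^ 2) *
      ramanujanPhi_eq_expand_add (R := R)

end Jacobi

/-! ### The generating function of regular overpartitions -/

section Counting

variable {R : Type*} [CommSemiring R]

variable (R) in
theorem mk_Rbar (ℓ μ : ℕ) :
    (PowerSeries.mk fun n ↦ (Rbar ℓ μ n : R)) =
      (PowerSeries.mk fun n ↦ (regularCount ℓ μ n : R)) *
        PowerSeries.mk fun n ↦ (regularDistinctCount ℓ μ n : R) := by
  ext n
  simp [Rbar, coeff_mul]

theorem mk_regularDistinctCount (ℓ μ : ℕ) :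
    (PowerSeries.mk fun n ↦ (regularDistinctCount ℓ μ n : R)) =
      Nat.Partition.genFun fun i c ↦ if (¬ ℓ ∣ i ∧ ¬ μ ∣ i) ∧ c = 1 then (1 : R) else 0 := by
  ext n
  have hdistinct (p : n.Partition) : (p.parts.Nodup ∧ ∀ i ∈ p.parts, ¬ ℓ ∣ i ∧ ¬ μ ∣ i) ↔
      ∀ i ∈ p.parts, (¬ ℓ ∣ i ∧ ¬ μ ∣ i) ∧ p.parts.count i = 1 := by
    constructor
    · exact fun h i hi ↦ ⟨h.2 i hi, Multiset.count_eq_one_of_mem h.1 hi⟩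
    · intro h
      refine ⟨Multiset.nodup_iff_count_le_one.2 fun i ↦ ?_, fun i hi ↦ (h i hi).1⟩
      by_cases hi : i ∈ p.parts
      · exact (h i hi).2.le
      · simp [hi]
  rw [coeff_mk, Nat.Partition.coeff_genFun, regularDistinctCount, Fintype.card_subtype,
    card_filter, Nat.cast_sum]
  refine sum_congr rfl fun p _ ↦ ?_
  rw [Finsupp.prod, prod_boole, Nat.cast_ite, Nat.cast_one, Nat.cast_zero]
  exact if_congr (by simp [hdistinct]) rfl rfl

variable [TopologicalSpace R] [T2Space R]

theorem hasProd_regularCount [IsTopologicalSemiring R] (ℓ μ : ℕ) :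
    HasProd (fun i ↦ if ¬ ℓ ∣ i + 1 ∧ ¬ μ ∣ i + 1 then ∑' j : ℕ, X ^ ((i + 1) * j) else 1)
      (PowerSeries.mk fun n ↦ (regularCount ℓ μ n : R)) := by
  convert! Nat.Partition.hasProd_powerSeriesMk_card_restricted R
    (fun i ↦ ¬ ℓ ∣ i ∧ ¬ μ ∣ i) using 1
  ext n
  rw [coeff_mk, coeff_mk, regularCount, Fintype.card_subtype]
  rfl

theorem hasProd_regularDistinctCount (ℓ μ : ℕ) :
    HasProd (fun i ↦ if ¬ ℓ ∣ i + 1 ∧ ¬ μ ∣ i + 1 then 1 + X ^ (i + 1) else 1)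
      (PowerSeries.mk fun n ↦ (regularDistinctCount ℓ μ n : R)) := by
  let f (i c : ℕ) : R := if (¬ ℓ ∣ i ∧ ¬ μ ∣ i) ∧ c = 1 then 1 else 0
  have hmk : Nat.Partition.genFun f = PowerSeries.mk fun n ↦ (regularDistinctCount ℓ μ n : R) :=
    (mk_regularDistinctCount ℓ μ).symm
  have hfactor (i : ℕ) : 1 + ∑' j : ℕ, f (i + 1) (j + 1) • (X : R⟦X⟧) ^ ((i + 1) * (j + 1)) =
      if ¬ ℓ ∣ i + 1 ∧ ¬ μ ∣ i + 1 then 1 + X ^ (i + 1) else 1 := by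
    rw [tsum_eq_single 0 fun j hj ↦ by simp [f, hj]]
    split_ifs with h <;> simp [f, h]
  simpa only [hmk, hfactor] using Nat.Partition.hasProd_genFun f

end Counting

section GeneratingFunction

variable {R : Type*} [CommRing R]

variable (R) in
theorem mk_Rbar_mul_qPochhammer [TopologicalSpace R] [T2Space R] [IsTopologicalRing R]
    {ℓ μ : ℕ} [NeZero ℓ] [NeZero μ] (h : ℓ.Coprime μ) :
    (PowerSeries.mk fun n ↦ (Rbar ℓ μ n : R)) * (qPochhammer 1 * (V[ℓ] (qPochhammer (-1)) *
        (V[μ] (qPochhammer (-1)) * V[ℓ * μ] (qPochhammer 1)))) =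
      qPochhammer (-1) * (V[ℓ] (qPochhammer 1) *
        (V[μ] (qPochhammer 1) * V[ℓ * μ] (qPochhammer (-1)))) := by
  have hRbar := (hasProd_regularCount (R := R) ℓ μ).mul (hasProd_regularDistinctCount ℓ μ)
  rw [← mk_Rbar] at hRbar
  have hlhs := hRbar.mul ((hasProd_qPochhammer 1).mul ((hasProd_expand_qPochhammer ℓ (-1)).mul
    ((hasProd_expand_qPochhammer μ (-1)).mul (hasProd_expand_qPochhammer (ℓ * μ) 1))))
  have hrhs := (hasProd_qPochhammer (-1 : R)).mul ((hasProd_expand_qPochhammer ℓ 1).mul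
    ((hasProd_expand_qPochhammer μ 1).mul (hasProd_expand_qPochhammer (ℓ * μ) (-1))))
  refine hlhs.unique ?_
  convert! hrhs using 2 with i
  have hgeom : (∑' j : ℕ, (X : R⟦X⟧) ^ ((i + 1) * j)) * (1 - X ^ (i + 1)) = 1 := by
    simp_rw [pow_mul]
    exact WithPiTopology.tsum_pow_mul_one_sub_of_constantCoeff_eq_zero (by simp)
  have hdvd : ℓ * μ ∣ i + 1 ↔ ℓ ∣ i + 1 ∧ μ ∣ i + 1 :=
    ⟨fun hi ↦ ⟨dvd_of_mul_right_dvd hi, dvd_of_mul_left_dvd hi⟩,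
      fun hi ↦ h.mul_dvd_of_dvd_of_dvd hi.1 hi.2⟩
  by_cases hℓ : ℓ ∣ i + 1 <;> by_cases hμ : μ ∣ i + 1 <;>
    simp only [hdvd, hℓ, hμ, not_true, not_false_iff, and_true, and_false, if_true, if_false,
      map_neg, map_one]
  · ring
  · ring
  · ring
  · linear_combination (1 + X ^ (i + 1)) * hgeom

theorem mk_Rbar_mul {ℓ μ : ℕ} [NeZero ℓ] [NeZero μ] (h : ℓ.Coprime μ) :
    (PowerSeries.mk fun n ↦ (Rbar ℓ μ n : R)) * φ₋ * V[ℓ * μ] φ₋ = V[ℓ] φ₋ * V[μ] φ₋ := by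
  let _ : TopologicalSpace R := ⊥
  have : DiscreteTopology R := ⟨rfl⟩
  let D : R⟦X⟧ := qPochhammer (-1)
  have hprod := mk_Rbar_mul_qPochhammer R h
  simp only [← qPochhammer_neg_one_mul_ramanujanPhi, map_mul] at hprod
  have hD : IsUnit D := isUnit_qPochhammer (-1)
  have hunit : IsUnit (D * V[ℓ] D * V[μ] D * V[ℓ * μ] D) :=
    ((hD.mul (hD.map _)).mul (hD.map _)).mul (hD.map _)
  refine hunit.mul_left_cancel ?_
  linear_combination hprod

theorem mk_Rbar_four_nine_mul_expand :
    (PowerSeries.mk fun n ↦ (Rbar 4 9 n : R)) * V[4] (V[9] φ₋ * φ₋ ^ 3) =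
      V[9] φ₋ * (φ * V[2] φ ^ 2) := by
  have hG := mk_Rbar_mul (R := R) (ℓ := 4) (μ := 9) (by norm_num)
  rw [← expand_expand (m := 4) (n := 9) rfl] at hG
  have hunit : IsUnit (V[4] φ₋ : R⟦X⟧) := (isUnit_rescale_ramanujanPhi (-1)).map _
  refine hunit.mul_left_cancel ?_
  rw [map_mul, map_pow]
  linear_combination
    (PowerSeries.mk fun n ↦ (Rbar 4 9 n : R)) * V[4] (V[9] φ₋) *
      expand_four_rescale_neg_one_ramanujanPhi_pow_four (R := R) + φ * V[2] φ ^ 2 * hG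

theorem atkinU_four_quartic (A B A₉ B₉ : R⟦X⟧) :
    atkinU 4 ((V[4] A₉ - 2 * X ^ 9 * V[4] B₉) *
        ((V[4] A + 2 * X * V[4] B) * (V[4] A ^ 2 + (2 * X * V[4] B) ^ 2))) =
      A₉ * A ^ 3 - 16 * X ^ 3 * B₉ * B ^ 3 := by
  have hdissect : (V[4] A₉ - 2 * X ^ 9 * V[4] B₉) *
        ((V[4] A + 2 * X * V[4] B) * (V[4] A ^ 2 + (2 * X * V[4] B) ^ 2)) =
      V[4] (A₉ * A ^ 3 - 16 * X ^ 3 * B₉ * B ^ 3) +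
      X ^ 1 * V[4] (2 * A₉ * A ^ 2 * B - 2 * X ^ 2 * B₉ * A ^ 3) +
      X ^ 2 * V[4] (4 * A₉ * A * B ^ 2 - 4 * X ^ 2 * B₉ * A ^ 2 * B) +
      X ^ 3 * V[4] (8 * A₉ * B ^ 3 - 8 * X ^ 2 * B₉ * A * B ^ 2) := by
    simp only [map_sub, map_mul, map_pow, map_ofNat, expand_X]
    ring
  rw [hdissect, map_add, map_add, map_add, atkinU_expand,
    atkinU_X_pow_mul_expand (by decide), atkinU_X_pow_mul_expand (by decide),
    atkinU_X_pow_mul_expand (by decide), add_zero, add_zero, add_zero]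

theorem mk_Rbar_four_nine_four_mul :
    (PowerSeries.mk fun n ↦ (Rbar 4 9 (4 * n) : R)) * (V[9] φ₋ * φ₋ ^ 3) =
      V[9] φ * φ ^ 3 - 16 * X ^ 3 * V[18] ψ * V[2] ψ ^ 3 := by
  have hnine : (V[9] φ₋ : R⟦X⟧) = V[4] (V[9] φ) - 2 * X ^ 9 * V[4] (V[18] ψ) := by
    rw [rescale_neg_one_ramanujanPhi_eq_expand_sub]
    simp only [map_sub, map_mul, map_ofNat, expand_X]
    rw [expand_expand (k := 36) rfl, expand_expand (k := 72) rfl, expand_expand (k := 36) rfl,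
      expand_expand (k := 72) rfl]
  have hphi : (φ : R⟦X⟧) * V[2] φ ^ 2 = (V[4] φ + 2 * X * V[4] (V[2] ψ)) *
      (V[4] φ ^ 2 + (2 * X * V[4] (V[2] ψ)) ^ 2) := by
    rw [expand_expand (k := 8) rfl, ← ramanujanPhi_eq_expand_add, expand_two_ramanujanPhi_sq]
  have hU : (PowerSeries.mk fun n ↦ (Rbar 4 9 (4 * n) : R)) =
      atkinU 4 (PowerSeries.mk fun n ↦ (Rbar 4 9 n : R)) := by
    ext n
    rw [coeff_atkinU, coeff_mk, coeff_mk]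
  rw [hU, ← atkinU_mul_expand, mk_Rbar_four_nine_mul_expand, hnine, hphi, atkinU_four_quartic]

theorem mk_Rbar_four_nine_four_mul_mod_three :
    (PowerSeries.mk fun n ↦ (Rbar 4 9 (4 * n) : ZMod 3)) = 1 := by
  have : Fact (Nat.Prime 3) := ⟨Nat.prime_three⟩
  have hnine (f : (ZMod 3)⟦X⟧) : V[9] f = f ^ 9 := by
    rw [← expand_expand (m := 3) (n := 3) rfl, expand_eq_pow, expand_eq_pow, ← pow_mul]
  have h3 : (3 : (ZMod 3)⟦X⟧) = 0 := by
    rw [← map_ofNat C 3]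
    exact map_zero C
  have hF := mk_Rbar_four_nine_four_mul (R := ZMod 3)
  have hjacobi := rescale_neg_one_ramanujanPhi_pow_four (R := ZMod 3)
  rw [← expand_expand (m := 9) (n := 2) rfl] at hF
  simp only [hnine] at hF
  have hunit : IsUnit ((φ₋ : (ZMod 3)⟦X⟧) ^ 12) := (isUnit_rescale_ramanujanPhi (-1)).pow 12
  have hcube : (φ₋ : (ZMod 3)⟦X⟧) ^ 12 = φ ^ 12 - 16 * X ^ 3 * V[2] ψ ^ 12 := by
    calc (φ₋ : (ZMod 3)⟦X⟧) ^ 12 = (φ ^ 4 - 16 * X * V[2] ψ ^ 4) ^ 3 := by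
          rw [← hjacobi, ← pow_mul]
      _ = φ ^ 12 - 16 * X ^ 3 * V[2] ψ ^ 12 := by
        linear_combination (-16 * φ ^ 8 * X * V[2] ψ ^ 4 + 256 * φ ^ 4 * X ^ 2 * V[2] ψ ^ 8 -
          1360 * X ^ 3 * V[2] ψ ^ 12) * h3
  refine hunit.mul_right_cancel ?_
  linear_combination hF - hcube

theorem mk_Rbar_four_nine_four_mul_mod_eight :
    (PowerSeries.mk fun n ↦ (Rbar 4 9 (4 * n) : ZMod 8)) =
      1 + 4 * (X * V[8] ψ + V[9] (X * V[8] ψ)) := by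
  let O : (ZMod 8)⟦X⟧ := X * V[8] ψ
  have h8 : (8 : (ZMod 8)⟦X⟧) = 0 := by
    rw [← map_ofNat C 8]
    exact map_zero C
  have hphi : (φ : (ZMod 8)⟦X⟧) = φ₋ + 4 * O := by
    linear_combination ramanujanPhi_eq_expand_add (R := ZMod 8) -
      rescale_neg_one_ramanujanPhi_eq_expand_sub (R := ZMod 8)
  have hfour : 4 * (φ₋ : (ZMod 8)⟦X⟧) = 4 := by
    have h : 4 * (φ : (ZMod 8)⟦X⟧) = 4 := by
      rw [ramanujanPhi]
      linear_combination squareSeries * h8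
    simpa only [map_mul, map_ofNat] using congrArg (rescale (-1)) h
  have hphi_nine : (V[9] φ : (ZMod 8)⟦X⟧) = V[9] φ₋ + 4 * V[9] O := by
    simpa only [map_add, map_mul, map_ofNat] using congrArg V[9] hphi
  have hfour_nine : 4 * (V[9] φ₋ : (ZMod 8)⟦X⟧) = 4 := by
    simpa only [map_mul, map_ofNat] using congrArg V[9] hfour
  have hunit : IsUnit (V[9] φ₋ * φ₋ ^ 3 : (ZMod 8)⟦X⟧) :=
    ((isUnit_rescale_ramanujanPhi (-1)).map _).mul ((isUnit_rescale_ramanujanPhi (-1)).pow 3)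
  refine hunit.mul_right_cancel ?_
  have hrhs : (V[9] φ * φ ^ 3 : (ZMod 8)⟦X⟧) = (V[9] φ₋ + 4 * V[9] O) * (φ₋ + 4 * O) ^ 3 := by
    rw [← hphi, ← hphi_nine]
  rw [mk_Rbar_four_nine_four_mul, hrhs]
  linear_combination -V[9] O * φ₋ ^ 3 * hfour_nine - O * V[9] φ₋ * φ₋ ^ 2 * hfour +
    (O * V[9] φ₋ * φ₋ ^ 2 + 6 * O ^ 2 * V[9] φ₋ * φ₋ + 8 * O ^ 3 * V[9] φ₋ +
      6 * V[9] O * O * φ₋ ^ 2 + 24 * V[9] O * O ^ 2 * φ₋ + 32 * V[9] O * O ^ 3 -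
      2 * X ^ 3 * V[18] ψ * V[2] ψ ^ 3) * h8

end GeneratingFunction

theorem three_dvd_Rbar_four_nine_four_mul {N : ℕ} (hN : N ≠ 0) : 3 ∣ Rbar 4 9 (4 * N) := by
  have h := congrArg (coeff N) mk_Rbar_four_nine_four_mul_mod_three
  rw [coeff_mk, coeff_one, if_neg hN] at h
  exact (ZMod.natCast_eq_zero_iff _ 3).1 h

theorem natCast_Rbar_four_nine_four_mul_mod_eight {N : ℕ} (hN : N ≠ 0) :
    (Rbar 4 9 (4 * N) : ZMod 8) = 4 * ((if IsSquare N ∧ Odd N then 1 else 0) +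
      if 9 ∣ N then if IsSquare (N / 9) ∧ Odd (N / 9) then 1 else 0 else 0) := by
  have h := congrArg (coeff N) mk_Rbar_four_nine_four_mul_mod_eight
  rwa [coeff_mk, map_add, coeff_one, if_neg hN, zero_add, ← map_ofNat C 4, coeff_C_mul, map_add,
    coeff_expand, coeff_X_mul_expand_ramanujanPsi, coeff_X_mul_expand_ramanujanPsi] at h

theorem eight_dvd_Rbar_four_nine_four_mul_iff {N : ℕ} (hN : N ≠ 0) :
    8 ∣ Rbar 4 9 (4 * N) ↔ ∀ m : ℕ, m.Coprime 6 → N ≠ m ^ 2 := by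
  have hcoprime (m : ℕ) : m.Coprime 6 ↔ Odd m ∧ ¬ 3 ∣ m := by
    rw [show 6 = 2 * 3 by rfl, Nat.coprime_mul_iff_right, Nat.coprime_two_right,
      Nat.coprime_comm, Nat.prime_three.coprime_iff_not_dvd]
  rw [← ZMod.natCast_eq_zero_iff, natCast_Rbar_four_nine_four_mul_mod_eight hN]
  by_cases h9 : 9 ∣ N
  · have hne (m : ℕ) (hm : m.Coprime 6) : N ≠ m ^ 2 := by
      rintro rfl
      exact ((hcoprime m).1 hm).2 ((Nat.pow_dvd_pow_iff two_ne_zero).1 h9)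
    obtain ⟨k, rfl⟩ := h9
    have hsq : IsSquare (9 * k) ↔ IsSquare k := isSquare_sq_mul_iff three_ne_zero
    have hodd : Odd (9 * k) ↔ Odd k := by grind
    refine iff_of_true ?_ hne
    rw [if_pos (dvd_mul_right 9 k), Nat.mul_div_cancel_left k (by norm_num)]
    simp only [hsq, hodd]
    split_ifs <;> decide
  · rw [if_neg h9, add_zero]
    split_ifs with h
    · obtain ⟨⟨t, rfl⟩, hodd⟩ := h
      have ht : t.Coprime 6 := (hcoprime t).2
        ⟨Nat.Odd.of_mul_left hodd, fun h3 ↦ h9 (mul_dvd_mul h3 h3)⟩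
      exact iff_of_false (by decide) fun hne ↦ hne t ht (sq t).symm
    · refine iff_of_true (mul_zero 4) fun m hm hNm ↦ h ?_
      exact hNm ▸ ⟨IsSquare.sq m, ((hcoprime m).1 hm).1.pow⟩

theorem Rbar_four_nine_nonresidue_general {N : ℕ} (hN : N ≠ 0) :
    Rbar 4 9 (4 * N) ≡ 0 [MOD 24] ↔ ∀ m : ℕ, m.Coprime 6 → N ≠ m ^ 2 := by
  have h24 : 24 ∣ Rbar 4 9 (4 * N) ↔ 3 ∣ Rbar 4 9 (4 * N) ∧ 8 ∣ Rbar 4 9 (4 * N) := by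
    lia
  rw [Nat.modEq_zero_iff_dvd, h24, eight_dvd_Rbar_four_nine_four_mul_iff hN,
    and_iff_right (three_dvd_Rbar_four_nine_four_mul hN)]

theorem Rbar_four_nine_nonresidue (k r : ℕ) (hk : 2 ≤ k) (hr1 : 1 ≤ r) (hr2 : r ≤ k - 1)
    (hnr : ¬ ∃ m : ℤ, m ^ 2 ≡ (r : ℤ) [ZMOD (k : ℤ)]) (n : ℕ) :
    Rbar 4 9 (4 * (k * n + r)) ≡ 0 [MOD 24] := by
  refine (Rbar_four_nine_nonresidue_general (by lia)).2 fun m _ hm ↦ hnr ⟨m, ?_⟩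
  exact Int.modEq_iff_dvd.2 ⟨-n, by zify at hm; linear_combination hm⟩
end

section
/- For all integers n ≥ 1 such that n is not the square of an odd integer, the number of (4,9)-regular overpartitions satisfies R̄_{4,9}(n) ≡ 0 (mod 4). -/
/-! Replacing `1 + x/(1 - x)` (ordinary copies of a part size) times `1 + x` (an overlined copy) by
`1 + 2x/(1 - x)` shows that overpartitions of `n` are counted by partitions of `n`, weighted by
`2 ^ k` where `k` is the number of distinct part sizes. Modulo `4` only the partitions with `k = 1`
survive, and these correspond to the divisors of `n`. Hence, for parts divisible by neither `p ^ 2`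
nor `q ^ 2` with `p` and `q` prime, the count is modulo `4` twice the number of divisors of `n` with
the same property. If `p ∣ n`, multiplying or dividing by `p` pairs these divisors up, and likewise
for `q`; if `n` is prime to `p * q`, all divisors are allowed, and `d ↦ n / d` pairs them up unless
`n` is a square. -/

open Finset Nat.Partition

section GeneratingFunction

open PowerSeries
open scoped PowerSeries.WithPiTopology

variable {R : Type*} [CommSemiring R]

lemma one_add_tsum_X_pow_mul_one_add_X_pow [TopologicalSpace R] [T2Space R]
    [IsTopologicalSemiring R] {k : ℕ} (hk : k ≠ 0) :
    (1 + ∑' j : ℕ, (X : R⟦X⟧) ^ (k * (j + 1))) * (1 + X ^ k) =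
      1 + ∑' j : ℕ, (2 : R) • (X : R⟦X⟧) ^ (k * (j + 1)) := by
  have hsum : Summable fun j : ℕ ↦ (X : R⟦X⟧) ^ (k * (j + 1)) := by
    simpa only [one_smul] using summable_genFun_term' (R := R) (fun _ _ ↦ 1) hk
  have hshift (j : ℕ) : (X : R⟦X⟧) ^ (k * (j + 1 + 1)) = X ^ (k * (j + 1)) * X ^ k := by ring
  set S := ∑' j : ℕ, (X : R⟦X⟧) ^ (k * (j + 1)) with hS
  have hrec : S = X ^ k + S * X ^ k := by
    rw [hS, ← hsum.tsum_mul_right,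
      tsum_eq_zero_add' (by simpa only [hshift] using hsum.mul_right _)]
    simp only [hshift, zero_add, mul_one]
  have hdouble : ∑' j : ℕ, (2 : R) • (X : R⟦X⟧) ^ (k * (j + 1)) = S + S := by
    simp only [two_smul, hsum.tsum_add hsum, hS]
  calc (1 + S) * (1 + X ^ k) = 1 + S + (X ^ k + S * X ^ k) := by ring
    _ = 1 + ∑' j : ℕ, (2 : R) • (X : R⟦X⟧) ^ (k * (j + 1)) := by rw [← hrec, hdouble, add_assoc]

variable (A : ℕ → Prop) [DecidablePred A]

lemma genFun_restricted_mul_genFun_distinct :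
    genFun (fun i _ ↦ if A i then (1 : R) else 0) *
        genFun (fun i c ↦ if A i ∧ c < 2 then (1 : R) else 0) =
      genFun (fun i _ ↦ if A i then (2 : R) else 0) := by
  let _ : TopologicalSpace R := ⊥
  have _ : DiscreteTopology R := ⟨rfl⟩
  refine ((hasProd_genFun _).mul (hasProd_genFun _)).unique ?_
  convert! hasProd_genFun (fun i _ ↦ if A i then (2 : R) else 0) using 2 with i
  by_cases hi : A (i + 1)
  · have hdistinct : ∑' j : ℕ, (if j + 1 < 2 then (1 : R) else 0) • (X : R⟦X⟧) ^ ((i + 1) * (j + 1))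
        = X ^ (i + 1) := by
      rw [tsum_eq_single 0 fun j hj ↦ by simp [hj]]
      simp
    simp only [hi, if_true, true_and, one_smul, hdistinct]
    exact one_add_tsum_X_pow_mul_one_add_X_pow i.succ_ne_zero
  · simp [hi]

lemma coeff_genFun_ite (r : R) (n : ℕ) :
    (genFun fun i _ ↦ if A i then r else 0).coeff n =
      ∑ p ∈ restricted n A, r ^ #p.parts.toFinset := by
  simp only [coeff_genFun, restricted, sum_filter, Finsupp.prod, Multiset.toFinsupp_support,
    prod_ite_zero, prod_const, Multiset.mem_toFinset]

lemma coeff_genFun_ite_and_lt_two (n : ℕ) :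
    (genFun fun i c ↦ if A i ∧ c < 2 then (1 : R) else 0).coeff n =
      #(restricted n A ∩ distincts n) := by
  rw [← countRestricted_two, restricted, countRestricted, ← filter_and, card_filter]
  simp_rw [coeff_genFun, Finsupp.prod, prod_boole, Multiset.toFinsupp_support,
    Multiset.toFinsupp_apply, Multiset.mem_toFinset, forall_and, Nat.cast_sum, Nat.cast_ite,
    Nat.cast_one, Nat.cast_zero]

lemma sum_antidiagonal_card_restricted_mul_card_distincts (n : ℕ) :
    ∑ ab ∈ antidiagonal n, #(restricted ab.1 A) * #(restricted ab.2 A ∩ distincts ab.2) =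
      ∑ p ∈ restricted n A, 2 ^ #p.parts.toFinset := by
  have h := congrArg (coeff n) (genFun_restricted_mul_genFun_distinct (R := ℕ) A)
  simpa only [PowerSeries.coeff_mul, coeff_genFun_ite, coeff_genFun_ite_and_lt_two, one_pow,
    ← card_eq_sum_ones, Nat.cast_id] using h

end GeneratingFunction

lemma Rbar_eq_sum_two_pow (ℓ μ n : ℕ) :
    Rbar ℓ μ n =
      ∑ p ∈ restricted n (fun i ↦ ¬ ℓ ∣ i ∧ ¬ μ ∣ i), 2 ^ #p.parts.toFinset := by
  rw [← sum_antidiagonal_card_restricted_mul_card_distincts, Rbar]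
  refine sum_congr rfl fun ab _ ↦ ?_
  rw [regularCount, regularDistinctCount, Fintype.card_subtype, Fintype.card_subtype,
    restricted, restricted, distincts, inter_comm, filter_and]

section PartitionsWithOnePartSize

variable {n : ℕ}

/-- The partition of `n` into `n / d` copies of a divisor `d`. These are exactly the partitions
with a single part size. -/
def equalParts (d : ℕ) (hd : d ∈ n.divisors) : n.Partition where
  parts := Multiset.replicate (n / d) d
  parts_pos hi := Multiset.eq_of_mem_replicate hi ▸ Nat.pos_of_mem_divisors hd
  parts_sum := by
    rw [Multiset.sum_replicate, smul_eq_mul, Nat.div_mul_cancel (Nat.dvd_of_mem_divisors hd)]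

lemma toFinset_parts_equalParts {d : ℕ} (hd : d ∈ n.divisors) :
    (equalParts d hd).parts.toFinset = {d} := by
  have hpos : 0 < n / d := Nat.div_pos (Nat.divisor_le hd) (Nat.pos_of_mem_divisors hd)
  exact (Multiset.toFinset_replicate _ d).trans (if_neg hpos.ne')

lemma eq_equalParts_of_toFinset_eq_singleton {p : n.Partition} {d : ℕ}
    (hp : p.parts.toFinset = {d}) : ∃ hd : d ∈ n.divisors, p = equalParts d hd := by
  have hparts : p.parts = Multiset.replicate p.parts.card d := by
    rw [← Multiset.nsmul_singleton]
    exact ((Multiset.toFinset_eq_singleton_iff _ _).1 hp).2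
  have hsum : n = p.parts.card * d := by
    conv_lhs => rw [← p.parts_sum, hparts, Multiset.sum_replicate, smul_eq_mul]
  have hdp : d ∈ p.parts := Multiset.mem_toFinset.1 (hp ▸ mem_singleton_self d)
  have hn : n ≠ 0 := ((p.parts_pos hdp).trans_le (p.le_of_mem_parts hdp)).ne'
  have hd : d ∈ n.divisors := Nat.mem_divisors.2 ⟨⟨_, hsum.trans (mul_comm _ _)⟩, hn⟩
  have hcard : n / d = p.parts.card :=
    Nat.div_eq_of_eq_mul_left (Nat.pos_of_mem_divisors hd) hsum
  exact ⟨hd, Nat.Partition.ext (hparts.trans (by rw [← hcard, equalParts]))⟩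

variable (A : ℕ → Prop) [DecidablePred A]

lemma card_restricted_filter_card_toFinset_eq_one :
    #{p ∈ restricted n A | #p.parts.toFinset = 1} = #{d ∈ n.divisors | A d} := by
  symm
  refine card_bij (fun d hd ↦ equalParts d (mem_filter.1 hd).1) ?_ ?_ ?_
  · intro d hd
    have hparts := toFinset_parts_equalParts (mem_filter.1 hd).1
    simp only [restricted, mem_filter, mem_univ, true_and, ← Multiset.mem_toFinset, hparts,
      mem_singleton, forall_eq, card_singleton, and_true]
    exact (mem_filter.1 hd).2
  · intro d hd e he hde
    rw [← singleton_inj, ← toFinset_parts_equalParts (mem_filter.1 hd).1, hde,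
      toFinset_parts_equalParts]
  · intro p hp
    simp only [restricted, mem_filter, mem_univ, true_and] at hp
    obtain ⟨d, hpd⟩ := card_eq_one.1 hp.2
    obtain ⟨hd, rfl⟩ := eq_equalParts_of_toFinset_eq_singleton hpd
    have hAd : A d := hp.1 d (Multiset.mem_toFinset.1 (hpd ▸ mem_singleton_self d))
    exact ⟨d, mem_filter.2 ⟨hd, hAd⟩, rfl⟩

lemma two_pow_modEq_four {k : ℕ} (hk : k ≠ 0) : 2 ^ k ≡ 2 * if k = 1 then 1 else 0 [MOD 4] := by
  obtain rfl | hk2 : k = 1 ∨ 2 ≤ k := by omega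
  · rfl
  · rw [if_neg (by omega)]
    exact Nat.modEq_zero_iff_dvd.2 (pow_dvd_pow 2 hk2)

lemma sum_restricted_two_pow_modEq_four (hn : n ≠ 0) :
    ∑ p ∈ restricted n A, 2 ^ #p.parts.toFinset ≡ 2 * #{d ∈ n.divisors | A d} [MOD 4] := by
  rw [← card_restricted_filter_card_toFinset_eq_one A, card_filter, mul_sum]
  refine Nat.ModEq.sum fun p _ ↦ two_pow_modEq_four fun hcard ↦ hn ?_
  rw [← p.parts_sum, Multiset.toFinset_eq_empty.1 (card_eq_zero.1 hcard), Multiset.sum_zero]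

end PartitionsWithOnePartSize

lemma Rbar_modEq_two_mul_card_divisors (ℓ μ : ℕ) {n : ℕ} (hn : n ≠ 0) :
    Rbar ℓ μ n ≡ 2 * #{d ∈ n.divisors | ¬ ℓ ∣ d ∧ ¬ μ ∣ d} [MOD 4] := by
  rw [Rbar_eq_sum_two_pow]
  exact sum_restricted_two_pow_modEq_four _ hn

section DivisorParity

lemma even_card_divisors_filter_mul_self_ne (n : ℕ) : Even #{d ∈ n.divisors | d * d ≠ n} := by
  have div_of_mem {d : ℕ} (hd : d ∈ ({d ∈ n.divisors | d * d ≠ n} : Finset ℕ)) :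
      n ≠ 0 ∧ d ∣ n ∧ n / d * d = n ∧ n / d ≠ d := by
    obtain ⟨⟨hdn, hn⟩, hne⟩ := by simpa only [mem_filter, Nat.mem_divisors] using hd
    have hmul : n / d * d = n := Nat.div_mul_cancel hdn
    exact ⟨hn, hdn, hmul, fun heq ↦ hne (by rwa [heq] at hmul)⟩
  rw [← ZMod.natCast_eq_zero_iff_even, card_eq_sum_ones, Nat.cast_sum]
  refine sum_involution (fun d _ ↦ n / d) (fun _ _ ↦ rfl) (fun d hd _ ↦ (div_of_mem hd).2.2.2)
    (fun d hd ↦ ?_) (fun d hd ↦ Nat.div_div_self (div_of_mem hd).2.1 (div_of_mem hd).1)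
  obtain ⟨hn, hdn, hmul, hne⟩ := div_of_mem hd
  refine mem_filter.2 ⟨Nat.mem_divisors.2 ⟨Nat.div_dvd_of_dvd hdn, hn⟩, fun hsq ↦ hne ?_⟩
  exact mul_left_cancel₀ (left_ne_zero_of_mul (hmul.trans_ne hn)) (hsq.trans hmul.symm)

variable {n : ℕ}

lemma even_card_divisors_iff (hn : n ≠ 0) : Even #n.divisors ↔ ¬ IsSquare n := by
  constructor
  · rintro heven ⟨m, rfl⟩
    have hroot : {d ∈ (m * m).divisors | ¬ d * d ≠ m * m} = {m} := by
      ext d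
      simp only [ne_eq, not_not, mem_filter, Nat.mem_divisors, mem_singleton, Nat.mul_self_inj]
      exact ⟨And.right, fun h ↦ ⟨⟨h ▸ Dvd.intro _ rfl, hn⟩, h⟩⟩
    rw [← card_filter_add_card_filter_not (fun d ↦ d * d ≠ m * m), hroot, card_singleton] at heven
    exact Nat.not_even_iff_odd.2 (even_card_divisors_filter_mul_self_ne _).add_one heven
  · intro hsq
    rw [← filter_true_of_mem (s := n.divisors) (p := fun d ↦ d * d ≠ n)
      fun d _ hd ↦ hsq ⟨d, hd.symm⟩]
    exact even_card_divisors_filter_mul_self_ne n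

variable {p q : ℕ}

lemma even_card_divisors_filter_of_prime_dvd (hp : p.Prime) (hpn : p ∣ n) {A : ℕ → Prop}
    [DecidablePred A] (hA : ∀ d, ¬ p ∣ d → (A (p * d) ↔ A d)) :
    Even #{d ∈ n.divisors | ¬ p ^ 2 ∣ d ∧ A d} := by
  have hsq (d : ℕ) : p ^ 2 ∣ p * d ↔ p ∣ d := by
    rw [pow_two, Nat.mul_dvd_mul_iff_left hp.pos]
  set T : Finset ℕ := {d ∈ n.divisors | ¬ p ^ 2 ∣ d ∧ A d}
  have hmul_mem {d : ℕ} (hpd : ¬ p ∣ d) : p * d ∈ T ↔ d ∈ T := by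
    have hdvd : p * d ∣ n ↔ d ∣ n :=
      ⟨dvd_of_mul_left_dvd, (hp.coprime_iff_not_dvd.2 hpd).mul_dvd_of_dvd_of_dvd hpn⟩
    have hd2 : ¬ p ^ 2 ∣ d := mt (dvd_trans (dvd_pow_self p two_ne_zero)) hpd
    simp only [T, mem_filter, Nat.mem_divisors, hdvd, hsq, hpd, hd2, hA d hpd]
  have hbij : #{d ∈ T | ¬ p ∣ d} = #{d ∈ T | p ∣ d} := by
    refine card_bij (fun d _ ↦ p * d) ?_ ?_ ?_
    · intro d hd
      obtain ⟨hdT, hpd⟩ := mem_filter.1 hd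
      exact mem_filter.2 ⟨(hmul_mem hpd).2 hdT, dvd_mul_right p d⟩
    · exact fun d _ e _ ↦ Nat.eq_of_mul_eq_mul_left hp.pos
    · intro d hd
      obtain ⟨hdT, e, rfl⟩ := mem_filter.1 hd
      have hpe : ¬ p ∣ e := mt (hsq e).2 (mem_filter.1 hdT).2.1
      exact ⟨e, mem_filter.2 ⟨(hmul_mem hpe).1 hdT, hpe⟩, rfl⟩
  rw [← card_filter_add_card_filter_not (p ∣ ·), hbij]
  exact ⟨_, rfl⟩

lemma sq_dvd_mul_iff_of_not_dvd (hp : p.Prime) (hq : q.Prime) {d : ℕ} (hpd : ¬ p ∣ d) :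
    q ^ 2 ∣ p * d ↔ q ^ 2 ∣ d := by
  obtain rfl | hne := eq_or_ne q p
  · rw [pow_two, Nat.mul_dvd_mul_iff_left hp.pos]
    exact iff_of_false hpd fun h ↦ hpd (dvd_of_mul_left_dvd h)
  · exact (((Nat.coprime_primes hq hp).2 hne).pow_left 2).dvd_mul_left

lemma even_card_divisors_filter_not_sq_dvd_iff (hp : p.Prime) (hq : q.Prime) (hn : n ≠ 0) :
    Even #{d ∈ n.divisors | ¬ p ^ 2 ∣ d ∧ ¬ q ^ 2 ∣ d} ↔
      ¬ ∃ m : ℕ, m.Coprime (p * q) ∧ n = m ^ 2 := by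
  by_cases hpn : p ∣ n
  · refine iff_of_true (even_card_divisors_filter_of_prime_dvd hp hpn fun d hpd ↦
      not_congr (sq_dvd_mul_iff_of_not_dvd hp hq hpd)) ?_
    rintro ⟨m, hm, rfl⟩
    exact hp.coprime_iff_not_dvd.1 hm.coprime_mul_right_right.symm (hp.dvd_of_dvd_pow hpn)
  by_cases hqn : q ∣ n
  · simp only [and_comm (a := ¬ p ^ 2 ∣ _)]
    refine iff_of_true (even_card_divisors_filter_of_prime_dvd hq hqn fun d hqd ↦
      not_congr (sq_dvd_mul_iff_of_not_dvd hq hp hqd)) ?_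
    rintro ⟨m, hm, rfl⟩
    exact hq.coprime_iff_not_dvd.1 hm.coprime_mul_left_right.symm (hq.dvd_of_dvd_pow hqn)
  have not_sq_dvd {r d : ℕ} (hrn : ¬ r ∣ n) (hdn : d ∣ n) : ¬ r ^ 2 ∣ d := fun h ↦
    hrn ((dvd_pow_self r two_ne_zero).trans (h.trans hdn))
  rw [filter_true_of_mem fun d hd ↦
    have hdn := Nat.dvd_of_mem_divisors hd
    ⟨not_sq_dvd hpn hdn, not_sq_dvd hqn hdn⟩, even_card_divisors_iff hn, isSquare_iff_exists_sq]
  refine not_congr (exists_congr fun m ↦ (and_iff_right_of_imp ?_).symm)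
  rintro rfl
  have coprime_of_not_dvd {r : ℕ} (hr : r.Prime) (hrn : ¬ r ∣ m ^ 2) : m.Coprime r :=
    (hr.coprime_iff_not_dvd.2 fun h ↦ hrn (h.trans (dvd_pow_self m two_ne_zero))).symm
  exact (coprime_of_not_dvd hp hpn).mul_right (coprime_of_not_dvd hq hqn)

end DivisorParity

theorem Rbar_four_nine_mod_four_general {p q n : ℕ} (hp : p.Prime) (hq : q.Prime) (hn : n ≠ 0) :
    Rbar (p ^ 2) (q ^ 2) n ≡ 0 [MOD 4] ↔ ¬ ∃ m : ℕ, m.Coprime (p * q) ∧ n = m ^ 2 := by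
  have hcount := Rbar_modEq_two_mul_card_divisors (p ^ 2) (q ^ 2) hn
  rw [← even_card_divisors_filter_not_sq_dvd_iff hp hq hn, even_iff_two_dvd]
  rw [Nat.ModEq] at hcount ⊢
  omega

theorem Rbar_four_nine_mod_four (n : ℕ) (hn : 1 ≤ n)
    (h : ¬ ∃ m : ℕ, Odd m ∧ 0 < m ∧ n = m ^ 2) :
    Rbar 4 9 n ≡ 0 [MOD 4] :=
  (Rbar_four_nine_mod_four_general Nat.prime_two Nat.prime_three (by omega)).2
    fun ⟨m, hm, hnm⟩ ↦ have hodd : Odd m := hm.coprime_mul_right_right.odd_of_right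
      h ⟨m, hodd, hodd.pos, hnm⟩
end

section
/- For all integers n ≥ 0, the number of (4,9)-regular overpartitions satisfies R̄_{4,9}(18n+15) ≡ 0 (mod 48). -/
/-!
Gauss's identity says that the generating series of overpartitions is `1 / φ(-q)`, where
`φ(-q) = ∑ (-1) ^ x q ^ (x ^ 2)`. Sorting the exponents of `φ(-q)` modulo `3` gives
`φ(-q) = φ(-q ^ 9) (1 + 2 ν(q))`, where `ν` has only exponents `≡ 1` modulo `3`, and the product
formula for the generating series `G` of `(4, 9)`-regular overpartitions then collapses to
`G(q) (1 + 2 ν(q)) = 1 + 2 ν(q ^ 4)`.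

Modulo `16`, solving for `G` leaves only `8 ν(q) ^ 2 (ν(q ^ 4) - ν(q))` in exponents `n` divisible
by `3`. The parity of its relevant coefficient counts the solutions of `x ^ 2 + 2 y ^ 2 = n` with
`x ≡ y ≡ 1` modulo `3`, and for `n ≡ 15` modulo `18` an isometric involution without fixed points
pairs these solutions off.

Modulo `3`, where `F(q) ^ 3 = F(q ^ 3)`, one can divide by `1 + 2 ν = 1 - ν` explicitly. Each term
of the result vanishes in the exponents `≡ 15` modulo `18`, either for its exponents modulo `3` or
`9`, or by parity: a rotation of order three of the form `3 x ^ 2 + y ^ 2` shows that its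
theta series restricted to `y ≡ 1` modulo `3` has no even exponents.
-/

namespace Overpartition

open Finset Filter PowerSeries

section SupportedMod

variable {R : Type*} [CommRing R]

/-- `SupportedMod m r F` says that `X ^ n` occurs in `F` only for `n` in the residue class of `r`
modulo `m`. -/
def SupportedMod (m r : ℕ) (F : R⟦X⟧) : Prop :=
  ∀ n, coeff n F ≠ 0 → n ≡ r [MOD m]

variable {F K : R⟦X⟧} {m r s : ℕ}

theorem SupportedMod.coeff_eq_zero (hF : SupportedMod m r F) {n : ℕ} (hn : n % m ≠ r % m) :
    coeff n F = 0 :=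
  of_not_not fun h ↦ hn (hF n h)

theorem SupportedMod.sub (hF : SupportedMod m r F) (hK : SupportedMod m r K) :
    SupportedMod m r (F - K) := by
  intro n hn
  by_contra h
  exact hn (by rw [map_sub, hF.coeff_eq_zero h, hK.coeff_eq_zero h, sub_zero])

theorem SupportedMod.mul (hF : SupportedMod m r F) (hK : SupportedMod m s K) :
    SupportedMod m (r + s) (F * K) := by
  intro n hn
  rw [coeff_mul] at hn
  obtain ⟨p, hp, hne⟩ := exists_ne_zero_of_sum_ne_zero hn
  rw [← HasAntidiagonal.mem_antidiagonal.mp hp]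
  exact (hF _ (left_ne_zero_of_mul hne)).add (hK _ (right_ne_zero_of_mul hne))

theorem SupportedMod.pow (hF : SupportedMod m r F) (k : ℕ) : SupportedMod m (k * r) (F ^ k) := by
  induction k with
  | zero =>
    intro n hn
    rw [pow_zero, coeff_one] at hn
    rw [zero_mul, (ite_ne_right_iff.mp hn).1]
  | succ k ih =>
    rw [pow_succ, Nat.succ_mul]
    exact ih.mul hF

theorem SupportedMod.of_dvd {d : ℕ} (hF : SupportedMod m r F) (hd : d ∣ m) :
    SupportedMod d r F :=
  fun n hn ↦ (hF n hn).of_dvd hd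

theorem SupportedMod.expand (hF : SupportedMod m r F) {k : ℕ} (hk : k ≠ 0) :
    SupportedMod (k * m) (k * r) (F.expand k hk) := by
  intro n hn
  rw [coeff_expand] at hn
  obtain ⟨⟨j, rfl⟩, hj⟩ := ite_ne_right_iff.mp hn
  rw [Nat.mul_div_cancel_left _ (Nat.pos_of_ne_zero hk)] at hj
  exact (hF j hj).mul_left' k

theorem supportedMod_expand {k : ℕ} (hk : k ≠ 0) (F : R⟦X⟧) : SupportedMod k 0 (F.expand k hk) :=
  fun _ hn ↦ Nat.modEq_zero_iff_dvd.mpr <| of_not_not fun h ↦ hn (coeff_expand_of_not_dvd k hk F h)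

end SupportedMod

section FiberSeries

variable {R : Type*} [CommRing R] {ι κ : Type*}

/-- The generating series `∑ i, w i * X ^ f i` of a family of weights `w` graded by `f`. It is only
meaningful when `f` has finite fibers, since `∑ᶠ` is `0` on infinitely supported families. -/
noncomputable def fiberSeries (f : ι → ℕ) (w : ι → R) : R⟦X⟧ :=
  .mk fun n ↦ ∑ᶠ i ∈ f ⁻¹' {n}, w i

variable {f : ι → ℕ} {g : κ → ℕ} {w : ι → R} {v : κ → R} {n : ℕ}

theorem coeff_fiberSeries_eq_sum {s : Finset ι} (hs : f ⁻¹' {n} ⊆ s) :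
    coeff n (fiberSeries f w) = ∑ i ∈ s, if f i = n then w i else 0 := by
  rw [fiberSeries, coeff_mk, finsum_mem_eq_sum_of_inter_support_eq (t := {i ∈ s | f i = n}),
    sum_filter]
  ext i
  simpa using fun _ hi ↦ hs hi

theorem exists_of_coeff_fiberSeries_ne_zero (h : coeff n (fiberSeries f w) ≠ 0) :
    ∃ i, f i = n := by
  rw [fiberSeries, coeff_mk] at h
  obtain ⟨i, hi, -⟩ := exists_ne_zero_of_finsum_mem_ne_zero h
  exact ⟨i, hi⟩

theorem coeff_sum_monomial_eq_coeff_fiberSeries {s : Finset ι} (hs : f ⁻¹' {n} ⊆ s) :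
    coeff n (∑ i ∈ s, monomial (f i) (w i)) = coeff n (fiberSeries f w) := by
  rw [coeff_fiberSeries_eq_sum hs, map_sum]
  simp only [coeff_monomial, eq_comm]

theorem map_fiberSeries {S : Type*} [CommRing S] (φ : R →+* S)
    (hf : ∀ n, (f ⁻¹' {n}).Finite) :
    (fiberSeries f w).map φ = fiberSeries f (φ ∘ w) := by
  ext n
  rw [coeff_map, fiberSeries, fiberSeries, coeff_mk, coeff_mk]
  exact φ.toAddMonoidHom.map_finsum_mem _ (hf n)

theorem expand_fiberSeries {k : ℕ} (hk : k ≠ 0) :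
    (fiberSeries f w).expand k hk = fiberSeries (fun i ↦ k * f i) w := by
  ext n
  rw [coeff_expand, fiberSeries, fiberSeries, coeff_mk, coeff_mk]
  split_ifs with h
  · obtain ⟨j, rfl⟩ := h
    have hfiber : (fun i ↦ k * f i) ⁻¹' {k * j} = f ⁻¹' {j} :=
      Set.ext fun i ↦ Nat.mul_right_inj hk
    rw [Nat.mul_div_cancel_left _ (Nat.pos_of_ne_zero hk), hfiber]
  · have hempty : (fun i ↦ k * f i) ⁻¹' {n} = ∅ :=
      Set.eq_empty_of_forall_notMem fun i hi ↦ h ⟨f i, hi.symm⟩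
    rw [hempty, finsum_mem_empty]

theorem fiberSeries_comp_equiv (e : κ ≃ ι) :
    fiberSeries (f ∘ e) (w ∘ e) = fiberSeries f w := by
  ext n
  rw [fiberSeries, fiberSeries, coeff_mk, coeff_mk, Set.preimage_comp]
  exact finsum_mem_eq_of_bijOn e (e.bijOn fun _ ↦ Iff.rfl) fun _ _ ↦ rfl

theorem fiberSeries_prod_fintype {τ : Type*} [Fintype τ] {f : ι × τ → ℕ} {w : ι × τ → R}
    (hf : ∀ n, (f ⁻¹' {n}).Finite) :
    fiberSeries f w = ∑ t, fiberSeries (fun i ↦ f (i, t)) (fun i ↦ w (i, t)) := by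
  classical
  ext n
  set s := (hf n).toFinset.image Prod.fst
  rw [coeff_fiberSeries_eq_sum (s := s ×ˢ univ) fun i hi ↦ by simpa [s] using ⟨i.2, hi⟩, map_sum,
    sum_product_right]
  refine sum_congr rfl fun t _ ↦ ?_
  rw [coeff_fiberSeries_eq_sum (s := s) fun i hi ↦ by simpa [s] using ⟨t, hi⟩]

theorem finite_preimage_add (hf : ∀ n, (f ⁻¹' {n}).Finite) (hg : ∀ n, (g ⁻¹' {n}).Finite)
    (n : ℕ) : ((fun p : ι × κ ↦ f p.1 + g p.2) ⁻¹' {n}).Finite :=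
  (((Set.finite_Iic n).preimage' fun a _ ↦ hf a).prod
    ((Set.finite_Iic n).preimage' fun a _ ↦ hg a)).subset fun p (hp : f p.1 + g p.2 = n) ↦
      ⟨hp ▸ Nat.le_add_right _ _, hp ▸ Nat.le_add_left _ _⟩

theorem finite_preimage_const_mul {k : ℕ} (hk : k ≠ 0)
    (hf : ∀ n, (f ⁻¹' {n}).Finite) (n : ℕ) : ((fun i ↦ k * f i) ⁻¹' {n}).Finite :=
  (hf (n / k)).subset fun i (hi : k * f i = n) ↦
    (Nat.div_eq_of_eq_mul_right (Nat.pos_of_ne_zero hk) hi.symm).symm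

theorem fiberSeries_mul (hf : ∀ n, (f ⁻¹' {n}).Finite) (hg : ∀ n, (g ⁻¹' {n}).Finite) :
    fiberSeries f w * fiberSeries g v =
      fiberSeries (fun p : ι × κ ↦ f p.1 + g p.2) (fun p ↦ w p.1 * v p.2) := by
  ext n
  set s := ((Set.finite_Iic n).preimage' fun a _ ↦ hf a).toFinset
  set t := ((Set.finite_Iic n).preimage' fun a _ ↦ hg a).toFinset
  have coeff_mul_coeff : ∀ a ∈ antidiagonal n,
      coeff a.1 (fiberSeries f w) * coeff a.2 (fiberSeries g v) =
        ∑ p ∈ s ×ˢ t, if (f p.1, g p.2) = a then w p.1 * v p.2 else 0 := by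
    intro a ha
    rw [coeff_fiberSeries_eq_sum (s := s) fun i (hi : f i = a.1) ↦ by
        simpa [s, hi] using HasAntidiagonal.antidiagonal.fst_le ha,
      coeff_fiberSeries_eq_sum (s := t) fun j (hj : g j = a.2) ↦ by
        simpa [t, hj] using HasAntidiagonal.antidiagonal.snd_le ha,
      sum_mul_sum, ← sum_product']
    simp only [ite_zero_mul_ite_zero, Prod.ext_iff]
  rw [coeff_mul, sum_congr rfl coeff_mul_coeff, sum_comm,
    coeff_fiberSeries_eq_sum (s := s ×ˢ t) fun p (hp : _ = n) ↦ by simp [s, t, ← hp]]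
  simp only [sum_ite_eq, HasAntidiagonal.mem_antidiagonal]

theorem prime_dvd_ncard_of_iterate_eq {p : ℕ} [Fact p.Prime] {s : Set ι} (hs : s.Finite)
    {σ : ι → ι} (hσ : Set.MapsTo σ s s) (hiter : ∀ i ∈ s, σ^[p] i = i)
    (hfix : ∀ i ∈ s, σ i ≠ i) : p ∣ s.ncard := by
  classical
  have := hs.fintype
  let τ : Function.End s := hσ.restrict
  have hτ : τ ^ p ^ 1 = 1 := by
    rw [pow_one]
    funext i
    refine Subtype.ext ?_
    have hpow : τ ^ p = τ^[p] := hom_coe_pow (fun g : Function.End s ↦ g) rfl (fun _ _ ↦ rfl) τ p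
    exact (congrArg Subtype.val (congrFun hpow i)).trans
      ((hσ.coe_iterate_restrict i p).trans (hiter i i.2))
  have hempty : IsEmpty (Function.fixedPoints τ) :=
    ⟨fun i ↦ hfix i.1 i.1.2 (congrArg Subtype.val i.2)⟩
  have hcard : Fintype.card s ≡ 0 [MOD p] :=
    (Equiv.Perm.card_fixedPoints_modEq hτ).trans (by rw [Fintype.card_eq_zero_iff.mpr hempty])
  rwa [Nat.modEq_zero_iff_dvd, ← Nat.card_eq_fintype_card] at hcard

theorem coeff_fiberSeries_eq_zero_of_iterate_eq (p : ℕ) [Fact p.Prime] [CharP R p]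
    (hf : (f ⁻¹' {n}).Finite) (σ : ι → ι) (hσ : ∀ i, f i = n → f (σ i) = n)
    (hiter : ∀ i, f i = n → σ^[p] i = i) (hfix : ∀ i, f i = n → σ i ≠ i)
    (c : R) (hw : ∀ i, f i = n → w i = c) :
    coeff n (fiberSeries f w) = 0 := by
  have hdvd : p ∣ (f ⁻¹' {n}).ncard := prime_dvd_ncard_of_iterate_eq hf hσ hiter hfix
  rw [fiberSeries, coeff_mk, finsum_mem_congr (rfl : f ⁻¹' {n} = _) hw,
    finsum_mem_eq_finite_toFinset_sum _ hf, sum_const, nsmul_eq_mul,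
    ← Set.ncard_eq_toFinset_card _ hf, (CharP.cast_eq_zero_iff R p _).mpr hdvd, zero_mul]

end FiberSeries

/-- The `V`-operator `F(q) ↦ F(q ^ k)`. -/
local notation "V[" k "]" => PowerSeries.expand k (NeZero.ne k)

theorem expand_expand {R : Type*} [CommRing R] {k l m : ℕ} (hk : k ≠ 0) (hl : l ≠ 0) (hm : m ≠ 0)
    (h : k * l = m) (F : R⟦X⟧) : (F.expand l hl).expand k hk = F.expand m hm := by
  subst h
  exact (expand_mul k hk l hl F).symm

theorem pow_prime_eq_expand {p : ℕ} [hp : Fact p.Prime] (F : (ZMod p)⟦X⟧) :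
    F ^ p = F.expand p hp.out.ne_zero := by
  have h := MvPowerSeries.map_frobenius_expand (σ := Unit) (R := ZMod p) p hp.out.ne_zero (f := F)
  rw [ZMod.frobenius_zmod] at h
  rw [PowerSeries.expand, ← h]
  simp

section Theta

variable (R : Type*) [CommRing R]

/-- Gauss's theta series `φ(-q) = ∑ (-1) ^ x * q ^ x ^ 2`, the sum being over all `x : ℤ`. -/
noncomputable def theta : R⟦X⟧ :=
  fiberSeries (fun x : ℤ ↦ x.natAbs ^ 2) fun x ↦ (-1) ^ x.natAbs

/-- The part of `theta` coming from the integers `3 * k + 1`. By symmetry the integers `3 * k + 2`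
contribute the same series. -/
noncomputable def thetaResidueOne : R⟦X⟧ :=
  fiberSeries (fun k : ℤ ↦ (3 * k + 1).natAbs ^ 2) fun k ↦ (-1) ^ (3 * k + 1).natAbs

theorem preimage_natAbs_sq_subset_Icc (n : ℕ) :
    (fun x : ℤ ↦ x.natAbs ^ 2) ⁻¹' {n} ⊆ Set.Icc (-n : ℤ) n := fun x (hx : _ = n) ↦ by
  have : x.natAbs ≤ n := hx ▸ Nat.le_self_pow two_ne_zero _
  exact ⟨by lia, by lia⟩

theorem finite_preimage_natAbs_sq {ι : Type*} {e : ι → ℤ} (he : e.Injective) (n : ℕ) :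
    ((fun i ↦ (e i).natAbs ^ 2) ⁻¹' {n}).Finite :=
  have hfin := (Set.finite_Icc _ _).subset (preimage_natAbs_sq_subset_Icc n)
  hfin.preimage (f := e) he.injOn

theorem injective_three_mul_add_one : Function.Injective fun k : ℤ ↦ 3 * k + 1 :=
  fun _ _ h ↦ mul_left_cancel₀ three_ne_zero (add_right_cancel h)

theorem map_thetaResidueOne {S : Type*} [CommRing S] (φ : R →+* S) :
    (thetaResidueOne R).map φ = thetaResidueOne S := by
  rw [thetaResidueOne, map_fiberSeries φ (finite_preimage_natAbs_sq injective_three_mul_add_one)]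
  simp only [Function.comp_def, map_pow, map_neg, map_one, thetaResidueOne]

theorem supportedMod_thetaResidueOne : SupportedMod 3 1 (thetaResidueOne R) := by
  intro n hn
  obtain ⟨k, rfl⟩ := exists_of_coeff_fiberSeries_ne_zero hn
  rw [← Int.natCast_modEq_iff]
  push_cast [sq_abs]
  exact (Int.modEq_iff_add_fac.mpr ⟨-(3 * k ^ 2 + 2 * k), by ring⟩)

theorem theta_eq_expand_nine_add :
    theta R = V[9] (theta R) + 2 * thetaResidueOne R := by
  let e := (Int.divModEquiv 3).symm
  have he : ∀ k t, e (k, t) = k * 3 + ((t : ℕ) : ℤ) := fun _ _ ↦ rfl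
  have hfin := finite_preimage_natAbs_sq e.injective
  have residue_zero : fiberSeries (fun k : ℤ ↦ (e (k, 0)).natAbs ^ 2)
      (fun k ↦ (-1 : R) ^ (e (k, 0)).natAbs) = V[9] (theta R) := by
    simp only [he, theta, expand_fiberSeries, Fin.val_zero, Nat.cast_zero, add_zero,
      Int.natAbs_mul, mul_pow, pow_mul']
    norm_num [mul_comm]
  have residue_one : fiberSeries (fun k : ℤ ↦ (e (k, 1)).natAbs ^ 2)
      (fun k ↦ (-1 : R) ^ (e (k, 1)).natAbs) = thetaResidueOne R := by
    simp only [he, thetaResidueOne, Fin.val_one, Nat.cast_one, mul_comm]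
  have residue_two : fiberSeries (fun k : ℤ ↦ (e (k, 2)).natAbs ^ 2)
      (fun k ↦ (-1 : R) ^ (e (k, 2)).natAbs) = thetaResidueOne R := by
    have hneg : ∀ k, (e (-1 - k, 2)).natAbs = (3 * k + 1).natAbs := fun k ↦ by
      rw [he, ← Int.natAbs_neg]
      congr 1
      simp only [Fin.val_two, Nat.cast_ofNat]
      ring
    rw [← fiberSeries_comp_equiv (Equiv.subLeft (-1))]
    simp only [Function.comp_def, Equiv.subLeft_apply, hneg, thetaResidueOne]
  calc theta R
      = fiberSeries (fun p ↦ (e p).natAbs ^ 2) (fun p ↦ (-1) ^ (e p).natAbs) :=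
        (fiberSeries_comp_equiv e).symm
    _ = V[9] (theta R) + 2 * thetaResidueOne R := by
        rw [fiberSeries_prod_fintype hfin, Fin.sum_univ_three, residue_zero, residue_one,
          residue_two, add_assoc, two_mul]

end Theta

section Gauss

variable {R : Type*} [CommRing R]

/-- The summands on the right-hand side of the finite form `prod_mul_sum_eq_sum_gaussTerm` of
Gauss's identity; the term `s = 0` is the product `∏ i < n, (1 - q ^ (i + 1))`. -/
def gaussTerm (q : R) (n s : ℕ) : R :=
  (-1) ^ s * q ^ (s * (n + 1)) * (∏ i ∈ Ico s n, (1 - q ^ (i + 1))) * ∏ i ∈ range s, (1 + q ^ i)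

theorem sum_gaussTerm_succ_sub (q : R) {m n : ℕ} (hm : m ≤ n) :
    ∑ s ∈ range (m + 1), (gaussTerm q (n + 1) s - (1 + q ^ (n + 1)) * gaussTerm q n s) =
      (-1) ^ (m + 1) * q ^ ((m + 1) * (n + 1)) * (∏ i ∈ Ico m n, (1 - q ^ (i + 1))) *
        ∏ i ∈ range (m + 1), (1 + q ^ i) := by
  induction m with
  | zero =>
    rw [sum_range_one, gaussTerm, gaussTerm, prod_Ico_succ_top (Nat.zero_le n)]
    simp only [range_zero, prod_empty, zero_mul, pow_zero, zero_add, one_mul, mul_one, pow_one,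
      prod_range_one]
    ring
  | succ m ih =>
    rw [sum_range_succ, ih (by lia), gaussTerm, gaussTerm, prod_Ico_succ_top hm,
      prod_eq_prod_Ico_succ_bot (show m < n by lia), prod_range_succ _ (m + 1)]
    ring

theorem prod_mul_sum_eq_sum_gaussTerm (q : R) (n : ℕ) :
    (∏ i ∈ range n, (1 + q ^ (i + 1))) * ∑ x ∈ Icc (-n : ℤ) n, (-1) ^ x.natAbs * q ^ x.natAbs ^ 2 =
      ∑ s ∈ range (n + 1), gaussTerm q n s := by
  induction n with
  | zero => simp [gaussTerm]
  | succ n ih =>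
    have hIcc : ∑ x ∈ Icc (-(n + 1 : ℕ) : ℤ) (n + 1 : ℕ), (-1) ^ x.natAbs * q ^ x.natAbs ^ 2 =
        ∑ x ∈ Icc (-n : ℤ) n, (-1) ^ x.natAbs * q ^ x.natAbs ^ 2 +
          2 * ((-1) ^ (n + 1) * q ^ (n + 1) ^ 2) := by
      have hnatAbs : ((n : ℤ) + 1).natAbs = n + 1 := by lia
      rw [Nat.cast_add, Nat.cast_one, sum_Icc_succ_eq_add_endpoints, Int.natAbs_neg, hnatAbs]
      ring
    have hprod : ∏ i ∈ range (n + 1), (1 + q ^ i) = 2 * ∏ i ∈ range n, (1 + q ^ (i + 1)) := by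
      rw [prod_range_succ', pow_zero, one_add_one_eq_two, mul_comm]
    have htelescope := sum_gaussTerm_succ_sub q le_rfl (n := n)
    rw [sum_sub_distrib, ← mul_sum, ← ih, sub_eq_iff_eq_add, Ico_self, prod_empty, hprod]
      at htelescope
    rw [sum_range_succ _ (n + 1), htelescope, gaussTerm, Ico_self, prod_empty, hprod, hIcc,
      prod_range_succ]
    ring

open PowerSeries.WithPiTopology Topology in
theorem hasProd_one_add_mul_theta [TopologicalSpace R] [DiscreteTopology R] {M P : R⟦X⟧}
    (hM : HasProd (fun i ↦ (1 : R⟦X⟧) + X ^ (i + 1)) M)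
    (hP : HasProd (fun i ↦ (1 : R⟦X⟧) - X ^ (i + 1)) P) : M * theta R = P := by
  have htheta : Tendsto (fun n : ℕ ↦ ∑ x ∈ Icc (-n : ℤ) n,
      (-1) ^ x.natAbs * (X : R⟦X⟧) ^ x.natAbs ^ 2) atTop (𝓝 (theta R)) := by
    rw [tendsto_iff_coeff_tendsto]
    refine fun d ↦ tendsto_atTop_of_eventually_const (i₀ := d) fun n hn ↦ ?_
    rw [theta, ← coeff_sum_monomial_eq_coeff_fiberSeries (s := Icc (-n : ℤ) n)]
    · congr! 2 with x
      rw [monomial_eq_C_mul_X_pow, map_pow, map_neg, map_one]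
    · rw [coe_Icc]
      exact (preimage_natAbs_sq_subset_Icc d).trans (Set.Icc_subset_Icc (by lia) (by lia))
  refine tendsto_nhds_unique (hM.tendsto_prod_nat.mul htheta) ?_
  have hP := hP.tendsto_prod_nat
  rw [tendsto_iff_coeff_tendsto] at hP ⊢
  refine fun d ↦ (hP d).congr' ?_
  filter_upwards [eventually_ge_atTop d] with n hn
  have hterm : ∀ s ∈ range n, coeff d (gaussTerm (X : R⟦X⟧) n (s + 1)) = 0 := by
    intro s _
    rw [gaussTerm, mul_comm ((-1) ^ _), mul_assoc, mul_assoc, coeff_X_pow_mul',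
      if_neg (by nlinarith)]
  rw [prod_mul_sum_eq_sum_gaussTerm, sum_range_succ', map_add, map_sum, sum_eq_zero hterm, zero_add]
  simp only [gaussTerm, pow_zero, zero_mul, one_mul, range_zero, prod_empty, mul_one,
    Nat.Ico_zero_eq_range]

end Gauss

section GeneratingFunctions

theorem hasProd_ite_dvd {M : Type*} [CommMonoid M] [TopologicalSpace M] {k : ℕ} (hk : k ≠ 0)
    {f : ℕ → M} {a : M} (h : HasProd (fun i ↦ f (k * (i + 1))) a) :
    HasProd (fun i ↦ if k ∣ i + 1 then f (i + 1) else 1) a := by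
  have hsucc (i : ℕ) : k * (i + 1) - 1 + 1 = k * (i + 1) :=
    Nat.sub_add_cancel (Nat.mul_pos (Nat.pos_of_ne_zero hk) i.succ_pos)
  have hinj : Function.Injective fun i ↦ k * (i + 1) - 1 := fun i j hij ↦ by
    have : k * (i + 1) = k * (j + 1) := by rw [← hsucc i, ← hsucc j]; exact congrArg (· + 1) hij
    exact Nat.succ_injective (Nat.eq_of_mul_eq_mul_left (Nat.pos_of_ne_zero hk) this)
  rw [← hinj.hasProd_iff]
  · simpa only [Function.comp_def, hsucc, dvd_mul_right, if_true] using h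
  · refine fun n hn ↦ if_neg fun hdvd ↦ hn ?_
    obtain ⟨c, hc⟩ := hdvd
    obtain ⟨i, rfl⟩ := Nat.exists_eq_succ_of_ne_zero (n := c) (by rintro rfl; simp at hc)
    exact ⟨i, by simp [← hc]⟩

variable (R : Type*) [CommRing R]

/-- The generating series of the partitions all of whose parts satisfy `p`. -/
noncomputable def partitionSeries (p : ℕ → Prop) [DecidablePred p] : R⟦X⟧ :=
  .mk fun n ↦ (#(Nat.Partition.restricted n p) : R)

/-- The generating series of the partitions into distinct parts all of which satisfy `p`. -/
noncomputable def distinctPartitionSeries (p : ℕ → Prop) [DecidablePred p] : R⟦X⟧ :=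
  .mk fun n ↦ (#{q ∈ Nat.Partition.restricted n p | q.parts.Nodup} : R)

/-- The generating series of the overpartitions all of whose parts satisfy `p`. -/
noncomputable def restrictedOverpartitionSeries (p : ℕ → Prop) [DecidablePred p] : R⟦X⟧ :=
  partitionSeries R p * distinctPartitionSeries R p

/-- The generating series of all overpartitions. -/
noncomputable def overpartitionSeries : R⟦X⟧ :=
  restrictedOverpartitionSeries R fun _ ↦ True

/-- The generating series of the `(ℓ, μ)`-regular overpartitions. -/
noncomputable def regularOverpartitionSeries (ℓ μ : ℕ) : R⟦X⟧ :=
  .mk fun n ↦ (Rbar ℓ μ n : R)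

theorem coeff_regularOverpartitionSeries (ℓ μ n : ℕ) :
    coeff n (regularOverpartitionSeries R ℓ μ) = Rbar ℓ μ n :=
  coeff_mk n _

theorem regularOverpartitionSeries_eq_restrictedOverpartitionSeries (ℓ μ : ℕ) :
    regularOverpartitionSeries R ℓ μ =
      restrictedOverpartitionSeries R fun i ↦ ¬ℓ ∣ i ∧ ¬μ ∣ i := by
  ext n
  rw [coeff_regularOverpartitionSeries, restrictedOverpartitionSeries, coeff_mul, Rbar,
    Nat.cast_sum]
  refine sum_congr rfl fun ab _ ↦ ?_
  rw [partitionSeries, distinctPartitionSeries, coeff_mk, coeff_mk, Nat.cast_mul, regularCount,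
    regularDistinctCount, Fintype.card_subtype, Fintype.card_subtype]
  simp only [Nat.Partition.restricted, filter_filter, and_comm]

theorem map_overpartitionSeries {S : Type*} [CommRing S] (φ : R →+* S) :
    (overpartitionSeries R).map φ = overpartitionSeries S := by
  rw [overpartitionSeries, restrictedOverpartitionSeries, map_mul]
  congr 1 <;> ext n <;> simp [partitionSeries, distinctPartitionSeries]

section Products

open PowerSeries.WithPiTopology

theorem continuous_expand [TopologicalSpace R] {k : ℕ} (hk : k ≠ 0) :
    Continuous (PowerSeries.expand k hk : R⟦X⟧ → R⟦X⟧) := by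
  refine continuous_iff_continuousAt.mpr fun F ↦ (tendsto_iff_coeff_tendsto ..).mpr fun d ↦ ?_
  simp only [coeff_expand]
  split_ifs
  · exact (continuous_coeff R (d / k)).tendsto F
  · exact tendsto_const_nhds

/-- The factor contributed by the part `i` to the product formula for overpartitions. -/
noncomputable def overpartitionFactor [TopologicalSpace R] (i : ℕ) : R⟦X⟧ :=
  (∑' j : ℕ, X ^ (i * j)) * (1 + X ^ i)

section DiscreteTopology

variable [TopologicalSpace R] [DiscreteTopology R]

theorem hasProd_distinctPartitionSeries (p : ℕ → Prop) [DecidablePred p] :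
    HasProd (fun i ↦ if p (i + 1) then (1 : R⟦X⟧) + X ^ (i + 1) else 1)
      (distinctPartitionSeries R p) := by
  let weight (i c : ℕ) : R := if p i ∧ c < 2 then 1 else 0
  have hfactor (i : ℕ) : (1 : R⟦X⟧) + ∑' j, weight (i + 1) (j + 1) • X ^ ((i + 1) * (j + 1)) =
      if p (i + 1) then 1 + X ^ (i + 1) else 1 := by
    rw [tsum_eq_single 0 fun j hj ↦ by
      rw [show weight (i + 1) (j + 1) = 0 from if_neg (by lia), zero_smul]]
    by_cases h : p (i + 1) <;> simp [weight, h]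
  have hgenFun : Nat.Partition.genFun weight = distinctPartitionSeries R p := by
    ext n
    rw [Nat.Partition.coeff_genFun, distinctPartitionSeries, coeff_mk, card_filter,
      Nat.Partition.restricted, sum_filter, Nat.cast_sum]
    refine sum_congr rfl fun q _ ↦ ?_
    rw [Finsupp.prod, prod_boole, ← ite_and, Nat.cast_ite, Nat.cast_one, Nat.cast_zero]
    refine if_congr ?_ rfl rfl
    have hcount : ∀ i ∈ q.parts, q.parts.count i < 2 ↔ q.parts.count i = 1 := fun i hi ↦ by
      have := Multiset.count_pos.mpr hi
      lia
    simp only [Multiset.toFinsupp_support, Multiset.mem_toFinset, Multiset.toFinsupp_apply,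
      Multiset.nodup_iff_count_eq_one, ← forall₂_and]
    exact forall₂_congr fun i hi ↦ and_congr_right' (hcount i hi)
  simpa only [hfactor, hgenFun] using Nat.Partition.hasProd_genFun weight

theorem hasProd_restrictedOverpartitionSeries (p : ℕ → Prop) [DecidablePred p] :
    HasProd (fun i ↦ if p (i + 1) then overpartitionFactor R (i + 1) else 1)
      (restrictedOverpartitionSeries R p) := by
  have hA : HasProd _ (partitionSeries R p) :=
    Nat.Partition.hasProd_powerSeriesMk_card_restricted R p
  have hB := hasProd_distinctPartitionSeries R p
  simpa only [restrictedOverpartitionSeries, overpartitionFactor, ite_mul_ite, one_mul] using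
    hA.mul hB

theorem expand_overpartitionFactor {k : ℕ} (hk : k ≠ 0) (i : ℕ) :
    (overpartitionFactor R (i + 1)).expand k hk = overpartitionFactor R (k * (i + 1)) := by
  have hsum : Summable fun j ↦ (X : R⟦X⟧) ^ ((i + 1) * j) := by
    simpa only [pow_mul] using summable_pow_of_constantCoeff_eq_zero (f := X ^ (i + 1)) (by simp)
  rw [overpartitionFactor, map_mul, hsum.map_tsum _ (continuous_expand R hk)]
  simp only [map_add, map_one, map_pow, expand_X, overpartitionFactor, ← pow_mul, mul_assoc]

theorem hasProd_expand_overpartitionSeries {k : ℕ} (hk : k ≠ 0) :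
    HasProd (fun i ↦ if k ∣ i + 1 then overpartitionFactor R (i + 1) else 1)
      ((overpartitionSeries R).expand k hk) := by
  have h := (hasProd_restrictedOverpartitionSeries R fun _ ↦ True).map _ (continuous_expand R hk)
  refine hasProd_ite_dvd hk ?_
  simpa only [Function.comp_def, if_true, expand_overpartitionFactor, overpartitionSeries] using h

end DiscreteTopology

theorem overpartitionSeries_mul_theta : overpartitionSeries R * theta R = 1 := by
  let _ : TopologicalSpace R := ⊥
  have : DiscreteTopology R := ⟨rfl⟩
  have hgeom (i : ℕ) : (∑' j : ℕ, (X : R⟦X⟧) ^ ((i + 1) * j)) * (1 - X ^ (i + 1)) = 1 := by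
    simp only [pow_mul]
    exact tsum_pow_mul_one_sub_of_constantCoeff_eq_zero (by simp)
  have hE := (multipliable_one_sub_X_pow R).hasProd
  have hA : HasProd _ (partitionSeries R fun _ ↦ True) :=
    Nat.Partition.hasProd_powerSeriesMk_card_restricted R fun _ ↦ True
  have hM := hasProd_distinctPartitionSeries R fun _ ↦ True
  simp only [if_true] at hA hM
  rw [overpartitionSeries, restrictedOverpartitionSeries, mul_assoc,
    hasProd_one_add_mul_theta hM hE]
  refine (hA.mul hE).unique ?_
  simp only [hgeom, hasProd_one]

theorem regularOverpartitionSeries_mul_expand_mul_expand {ℓ μ : ℕ} (hℓ : ℓ ≠ 0) (hμ : μ ≠ 0) :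
    regularOverpartitionSeries R ℓ μ *
        (overpartitionSeries R).expand ℓ hℓ * (overpartitionSeries R).expand μ hμ =
      overpartitionSeries R *
        (overpartitionSeries R).expand (ℓ.lcm μ) (Nat.lcm_ne_zero hℓ hμ) := by
  let _ : TopologicalSpace R := ⊥
  have : DiscreteTopology R := ⟨rfl⟩
  rw [regularOverpartitionSeries_eq_restrictedOverpartitionSeries]
  have hG := hasProd_restrictedOverpartitionSeries R fun i ↦ ¬ℓ ∣ i ∧ ¬μ ∣ i
  have hP : HasProd _ (overpartitionSeries R) :=
    hasProd_restrictedOverpartitionSeries R fun _ ↦ True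
  refine ((hG.mul (hasProd_expand_overpartitionSeries R hℓ)).mul
    (hasProd_expand_overpartitionSeries R hμ)).unique ?_
  convert hP.mul (hasProd_expand_overpartitionSeries R (Nat.lcm_ne_zero hℓ hμ)) using 2 with i
  by_cases h₁ : ℓ ∣ i + 1 <;> by_cases h₂ : μ ∣ i + 1 <;> simp [h₁, h₂, Nat.lcm_dvd_iff]

end Products

end GeneratingFunctions

section Dissection

variable (R : Type*) [CommRing R]

/-- The quotient `ν` of `thetaResidueOne` by `V[9] theta`, in terms of which the 3-dissection
`theta_eq_expand_nine_add` reads `theta = V[9] theta * (1 + 2 * ν)`. -/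
noncomputable def dissectionRatio : R⟦X⟧ :=
  thetaResidueOne R * V[9] (overpartitionSeries R)

theorem expand_overpartitionSeries_mul_expand_theta {k : ℕ} (hk : k ≠ 0) :
    (overpartitionSeries R).expand k hk * (theta R).expand k hk = 1 := by
  rw [← map_mul, overpartitionSeries_mul_theta, map_one]

theorem dissectionRatio_mul_expand_theta :
    dissectionRatio R * V[9] (theta R) = thetaResidueOne R := by
  rw [dissectionRatio, mul_assoc, expand_overpartitionSeries_mul_expand_theta, mul_one]

theorem one_add_two_mul_dissectionRatio :
    1 + 2 * dissectionRatio R = theta R * V[9] (overpartitionSeries R) := by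
  rw [dissectionRatio]
  linear_combination -V[9] (overpartitionSeries R) * theta_eq_expand_nine_add R -
    expand_overpartitionSeries_mul_expand_theta R (NeZero.ne 9)

/-- The inverse of the factor `1 + 2 * ν` in the 3-dissection of `theta`. -/
noncomputable def dissectionFactorInv : R⟦X⟧ :=
  V[9] (theta R) * overpartitionSeries R

theorem one_add_two_mul_dissectionRatio_mul_dissectionFactorInv :
    (1 + 2 * dissectionRatio R) * dissectionFactorInv R = 1 := by
  rw [one_add_two_mul_dissectionRatio, dissectionFactorInv]
  linear_combination theta R * overpartitionSeries R *
    expand_overpartitionSeries_mul_expand_theta R (NeZero.ne 9) +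
    overpartitionSeries_mul_theta R

theorem supportedMod_dissectionRatio : SupportedMod 3 1 (dissectionRatio R) :=
  (supportedMod_thetaResidueOne R).mul ((supportedMod_expand _ _).of_dvd (by decide))

theorem map_dissectionRatio {S : Type*} [CommRing S] (φ : R →+* S) :
    (dissectionRatio R).map φ = dissectionRatio S := by
  rw [dissectionRatio, map_mul, map_thetaResidueOne, map_expand, map_overpartitionSeries,
    dissectionRatio]

theorem regularOverpartitionSeries_nine_mul {ℓ : ℕ} (hℓ : ℓ ≠ 0) (hcop : ℓ.Coprime 9) :
    regularOverpartitionSeries R ℓ 9 * (1 + 2 * dissectionRatio R) =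
      1 + 2 * (dissectionRatio R).expand ℓ hℓ := by
  have hratio : 1 + 2 * (dissectionRatio R).expand ℓ hℓ =
      (theta R).expand ℓ hℓ * (overpartitionSeries R).expand (ℓ * 9) (by lia) := by
    rw [← expand_expand hℓ (NeZero.ne 9) _ rfl, ← map_mul, ← one_add_two_mul_dissectionRatio]
    simp only [map_add, map_one, map_mul, map_ofNat]
  have hG := regularOverpartitionSeries_mul_expand_mul_expand R hℓ (NeZero.ne 9)
  simp only [hcop.lcm_eq_mul] at hG
  rw [one_add_two_mul_dissectionRatio, hratio]
  set θ := theta R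
  set P := overpartitionSeries R
  have hP : P * θ = 1 := overpartitionSeries_mul_theta R
  have hPℓ : P.expand ℓ hℓ * θ.expand ℓ hℓ = 1 := expand_overpartitionSeries_mul_expand_theta R hℓ
  linear_combination θ * θ.expand ℓ hℓ * hG +
    θ.expand ℓ hℓ * P.expand (ℓ * 9) (by lia) * hP -
    regularOverpartitionSeries R ℓ 9 * θ * V[9] P * hPℓ

end Dissection

section ModSixteen

theorem coeff_modEq_sixteen_of_mul_one_add_two_mul {G v w : ℤ⟦X⟧}
    (hG : G * (1 + 2 * v) = 1 + 2 * w) (hv : SupportedMod 3 1 v) (hw : SupportedMod 3 1 w)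
    {n : ℕ} (hn : n ≠ 0) (hdvd : 3 ∣ n) :
    coeff n G ≡ 8 * coeff n (v ^ 2 * (w - v)) [ZMOD 16] := by
  -- Iterate `G = 1 + 2 * w - 2 * v * G`; modulo `3` the linear and quadratic terms live in degrees
  -- `1` and `2`.
  have hexp : G = 1 + 2 • (w - v) + 4 • (v * (v - w)) + 8 • (v ^ 2 * (w - v)) +
      16 • (v ^ 4 * G - w * v ^ 3) := by
    simp only [nsmul_eq_mul, Nat.cast_ofNat]
    linear_combination (1 - 2 * v + 4 * v ^ 2 - 8 * v ^ 3) * hG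
  have hone : coeff n (1 : ℤ⟦X⟧) = 0 := by rw [coeff_one, if_neg hn]
  have hlin : coeff n (w - v) = 0 := (hw.sub hv).coeff_eq_zero (by lia)
  have hquad : coeff n (v * (v - w)) = 0 := (hv.mul (hv.sub hw)).coeff_eq_zero (by lia)
  have hcoeff := congrArg (coeff n) hexp
  simp only [map_add, map_nsmul, hone, hlin, hquad] at hcoeff
  simp only [nsmul_eq_mul, Nat.cast_ofNat] at hcoeff
  exact Int.modEq_iff_dvd.mpr ⟨-coeff n (v ^ 4 * G - w * v ^ 3), by linarith⟩

variable (R : Type*) [CommRing R] [CharP R 2]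

theorem theta_eq_one_of_charTwo : theta R = 1 := by
  ext n
  rw [coeff_one]
  split_ifs with hn
  · rw [theta, coeff_fiberSeries_eq_sum (s := {0}) fun x hx ↦ by simpa [hn] using hx]
    simp [hn]
  · have hfin := finite_preimage_natAbs_sq (e := id) Function.injective_id n
    refine coeff_fiberSeries_eq_zero_of_iterate_eq 2 hfin Neg.neg
      (fun x hx ↦ by rwa [Int.natAbs_neg]) (fun x _ ↦ neg_neg x) (fun x hx hfix ↦ hn ?_) 1
      (fun x _ ↦ by rw [CharTwo.neg_eq, one_pow])
    rw [← hx, show x = 0 by lia]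
    rfl

theorem overpartitionSeries_eq_one_of_charTwo : overpartitionSeries R = 1 := by
  rw [← overpartitionSeries_mul_theta R, theta_eq_one_of_charTwo, mul_one]

theorem dissectionRatio_eq_thetaResidueOne_of_charTwo :
    dissectionRatio R = thetaResidueOne R := by
  rw [dissectionRatio, overpartitionSeries_eq_one_of_charTwo, map_one, mul_one]

theorem coeff_thetaResidueOne_mul_expand_two {n : ℕ} (hn : n % 18 = 15) :
    coeff n (thetaResidueOne R * V[2] (thetaResidueOne R)) = 0 := by
  have hfin := finite_preimage_natAbs_sq injective_three_mul_add_one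
  have hfin₂ := finite_preimage_const_mul two_ne_zero hfin
  have hnorm (a b : ℤ) : (3 * a + 1).natAbs ^ 2 + 2 * (3 * b + 1).natAbs ^ 2 = n ↔
      (3 * a + 1) ^ 2 + 2 * (3 * b + 1) ^ 2 = n := by
    rw [← Int.natCast_inj]
    push_cast [sq_abs]
    rfl
  have hdiv (a b : ℤ) (h : (3 * a + 1) ^ 2 + 2 * (3 * b + 1) ^ 2 = n) :
      ∃ c, a = b + 2 + 3 * c := by
    refine ⟨(a - b - 2) / 3, ?_⟩
    ring_nf at h
    lia
  -- In the coordinates `x = 3 * a + 1`, `y = 3 * b + 1` this is the isometry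
  -- `(x, y) ↦ ((x - 4 * y) / 3, -(2 * x + y) / 3)` of `x ^ 2 + 2 * y ^ 2`.
  let σ (p : ℤ × ℤ) : ℤ × ℤ :=
    ((p.1 - p.2 - 2) / 3 - p.2, -(p.2 + 2 * ((p.1 - p.2 - 2) / 3) + 2))
  have hσ (b c : ℤ) : σ (b + 2 + 3 * c, b) = (c - b, -(b + 2 * c + 2)) := by
    simp only [σ, show (b + 2 + 3 * c - b - 2) / 3 = c by lia]
  rw [thetaResidueOne, expand_fiberSeries, fiberSeries_mul hfin hfin₂]
  refine coeff_fiberSeries_eq_zero_of_iterate_eq 2 (finite_preimage_add hfin hfin₂ n) σ ?_ ?_ ?_ 1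
    fun p _ ↦ by rw [CharTwo.neg_eq, one_pow, one_pow, one_mul]
  all_goals
    rintro ⟨a, b⟩ h
    rw [hnorm] at h
    obtain ⟨c, rfl⟩ := hdiv a b h
  · rw [hσ, hnorm, ← h]
    ring
  · rw [Function.iterate_succ_apply, Function.iterate_one, hσ,
      show c - b = -(b + 2 * c + 2) + 2 + 3 * c by ring, hσ]
    ext <;> ring
  · rw [hσ]
    intro hfix
    obtain ⟨h₁, -⟩ := Prod.mk.inj hfix
    obtain rfl : b = -1 - c := by lia
    ring_nf at h
    lia

theorem coeff_dissectionRatio_sq_mul_expand_four_sub {n : ℕ} (hn : n % 18 = 15) :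
    coeff n (dissectionRatio (ZMod 2) ^ 2 *
      (V[4] (dissectionRatio (ZMod 2)) - dissectionRatio (ZMod 2))) = 0 := by
  rw [dissectionRatio_eq_thetaResidueOne_of_charTwo]
  set u := thetaResidueOne (ZMod 2)
  have hsq : u ^ 2 = V[2] u := pow_prime_eq_expand u
  have heq : u ^ 2 * (V[4] u - u) = V[2] (u * V[2] u) - u * V[2] u := by
    rw [mul_sub, hsq, map_mul, expand_expand _ _ (NeZero.ne 4) rfl, mul_comm u]
  rw [heq, map_sub, (supportedMod_expand _ _).coeff_eq_zero (by lia),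
    coeff_thetaResidueOne_mul_expand_two _ hn, sub_zero]

theorem sixteen_dvd_Rbar_four_nine {n : ℕ} (hn : n % 18 = 15) : 16 ∣ Rbar 4 9 n := by
  set v := dissectionRatio ℤ
  have hv : SupportedMod 3 1 v := supportedMod_dissectionRatio ℤ
  have hw : SupportedMod 3 1 (V[4] v) := (hv.expand _).of_dvd (by decide)
  have hcongr := coeff_modEq_sixteen_of_mul_one_add_two_mul
    (regularOverpartitionSeries_nine_mul ℤ (NeZero.ne 4) (by decide)) hv hw
    (n := n) (by lia) (by lia)
  have heven : 2 ∣ coeff n (v ^ 2 * (V[4] v - v)) := by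
    refine (ZMod.intCast_zmod_eq_zero_iff_dvd _ 2).mp ?_
    rw [← eq_intCast (Int.castRingHom (ZMod 2)), ← coeff_map]
    simp only [map_mul, map_pow, map_sub, map_expand, v, map_dissectionRatio]
    exact coeff_dissectionRatio_sq_mul_expand_four_sub hn
  rw [coeff_regularOverpartitionSeries] at hcongr
  have := hcongr.dvd
  lia

end ModSixteen

section ModThree

/-- The theta series of the form `3 * x ^ 2 + y ^ 2` restricted to `y ≡ 1 [ZMOD 3]`, with signs
`(-1) ^ (x + y)`. -/
noncomputable def mixedTheta (R : Type*) [CommRing R] : R⟦X⟧ :=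
  V[3] (theta R) * thetaResidueOne R

theorem exists_eq_two_mul_sub_of_even {x k : ℤ} (h : Even (3 * x ^ 2 + (3 * k + 1) ^ 2)) :
    ∃ c, x = 2 * c - k - 1 := by
  obtain ⟨m, hm⟩ := h
  obtain ⟨a, ha⟩ := Int.even_mul_pred_self x
  obtain ⟨b, hb⟩ := Int.even_mul_pred_self k
  exact ⟨m - x - 7 * k - 3 * a - 9 * b, by linear_combination hm - 3 * ha - 9 * hb⟩

theorem coeff_mixedTheta_eq_zero_of_even (R : Type*) [CommRing R] [CharP R 3] {n : ℕ}
    (hn : Even n) : coeff n (mixedTheta R) = 0 := by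
  have hfin : ∀ m, ((fun x : ℤ ↦ 3 * x.natAbs ^ 2) ⁻¹' {m}).Finite :=
    finite_preimage_const_mul three_ne_zero (finite_preimage_natAbs_sq Function.injective_id)
  have hfin₁ := finite_preimage_natAbs_sq injective_three_mul_add_one
  have hnorm (x k : ℤ) : 3 * x.natAbs ^ 2 + (3 * k + 1).natAbs ^ 2 = n ↔
      3 * x ^ 2 + (3 * k + 1) ^ 2 = n := by
    rw [← Int.natCast_inj]
    push_cast [sq_abs]
    rfl
  -- In the coordinates `x`, `y = 3 * k + 1` this is the rotation
  -- `(x, y) ↦ ((y - x) / 2, -(y + 3 * x) / 2)` of order three of `3 * x ^ 2 + y ^ 2`.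
  let σ (p : ℤ × ℤ) : ℤ × ℤ := (2 * p.2 + 1 - (p.1 + p.2 + 1) / 2, -((p.1 + p.2 + 1) / 2))
  have hσ (c k : ℤ) : σ (2 * c - k - 1, k) = (2 * k + 1 - c, -c) := by
    simp only [σ, show (2 * c - k - 1 + k + 1) / 2 = c by lia]
  rw [mixedTheta, theta, expand_fiberSeries, thetaResidueOne, fiberSeries_mul hfin hfin₁]
  refine coeff_fiberSeries_eq_zero_of_iterate_eq 3 (finite_preimage_add hfin hfin₁ n) σ ?_ ?_ ?_ 1
    ?_
  all_goals
    rintro ⟨x, k⟩ h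
    rw [hnorm] at h
    obtain ⟨c, rfl⟩ := exists_eq_two_mul_sub_of_even (x := x) (k := k)
      (h ▸ (Int.even_coe_nat n).mpr hn)
  · rw [hσ, hnorm, ← h]
    ring
  · rw [Function.iterate_succ_apply, Function.iterate_succ_apply, Function.iterate_one, hσ,
      show 2 * k + 1 - c = 2 * (k + 1 - c) - -c - 1 by ring, hσ,
      show 2 * -c + 1 - (k + 1 - c) = 2 * -k - -(k + 1 - c) - 1 by ring, hσ]
    ext <;> ring
  · rw [hσ, Ne, Prod.mk.injEq]
    lia
  · rw [← pow_add]
    refine Even.neg_one_pow ?_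
    rw [Nat.even_add, Int.natAbs_even, Int.natAbs_even, ← Int.even_add]
    exact ⟨c + k, by ring⟩

theorem supportedMod_three_mixedTheta (R : Type*) [CommRing R] :
    SupportedMod 3 1 (mixedTheta R) :=
  (supportedMod_expand _ _).mul (supportedMod_thetaResidueOne R)

theorem supportedMod_two_mixedTheta (R : Type*) [CommRing R] [CharP R 3] :
    SupportedMod 2 1 (mixedTheta R) := by
  intro n hn
  exact Nat.odd_iff.mp (Nat.not_even_iff_odd.mp fun h ↦ hn (coeff_mixedTheta_eq_zero_of_even R h))

theorem expand_three_theta_mul_expand_nine_theta (R : Type*) [CommRing R] :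
    V[3] (theta R) * V[9] (theta R) =
      V[9] (theta R) * V[27] (theta R) + 2 * V[3] (mixedTheta R) := by
  have h := congrArg V[3] (theta_eq_expand_nine_add R)
  rw [map_add, map_mul, map_ofNat, expand_expand _ _ (NeZero.ne 27) rfl] at h
  rw [mixedTheta, map_mul, expand_expand _ _ (NeZero.ne 9) rfl]
  linear_combination V[9] (theta R) * h

local notation "θ" => theta (ZMod 3)
local notation "ν" => dissectionRatio (ZMod 3)
local notation "K" => V[3] (dissectionFactorInv (ZMod 3))
local notation "H" => mixedTheta (ZMod 3)

theorem three_eq_zero : (3 : (ZMod 3)⟦X⟧) = 0 := by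
  rw [← map_ofNat (C (R := ZMod 3)), show (OfNat.ofNat 3 : ZMod 3) = 0 from rfl, map_zero]

theorem expand_three_dissectionFactorInv_eq_sq : K = (V[3] θ * V[9] θ) ^ 2 := by
  have hcube : V[3] θ ^ 3 = V[9] θ := by
    rw [pow_prime_eq_expand, expand_expand _ _ (NeZero.ne 9) rfl]
  have hcube₉ : V[9] θ ^ 3 = V[27] θ := by
    rw [pow_prime_eq_expand, expand_expand _ _ (NeZero.ne 27) rfl]
  rw [dissectionFactorInv, map_mul, expand_expand _ _ (NeZero.ne 27) rfl, ← hcube₉]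
  linear_combination V[9] θ ^ 2 * V[3] θ ^ 2 *
      expand_overpartitionSeries_mul_expand_theta (ZMod 3) (NeZero.ne 3) -
    V[3] (overpartitionSeries (ZMod 3)) * V[9] θ ^ 2 * hcube

theorem expand_three_dissectionFactorInv_eq_sub_sq : K = (V[9] θ * V[27] θ - V[3] H) ^ 2 := by
  rw [expand_three_dissectionFactorInv_eq_sq, expand_three_theta_mul_expand_nine_theta]
  congr 1
  linear_combination V[3] H * three_eq_zero

theorem dissectionRatio_sq_mul_expand_three_dissectionFactorInv : ν ^ 2 * K = H ^ 2 := by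
  rw [expand_three_dissectionFactorInv_eq_sq, mixedTheta, ← dissectionRatio_mul_expand_theta]
  ring

theorem one_sub_dissectionRatio_cube_mul : (1 - ν ^ 3) * K = 1 := by
  have h := congrArg V[3] (one_add_two_mul_dissectionRatio_mul_dissectionFactorInv (ZMod 3))
  simp only [map_add, map_mul, map_one, map_ofNat, ← pow_prime_eq_expand ν] at h
  linear_combination h - ν ^ 3 * K * three_eq_zero

theorem eq_of_mul_one_add_two_mul_dissectionRatio {g w : (ZMod 3)⟦X⟧}
    (h : g * (1 + 2 * ν) = 1 + 2 * w) :
    g = (V[9] θ * V[27] θ) ^ 2 + V[9] θ * V[27] θ * V[3] H + V[3] H ^ 2 - w * H ^ 2 +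
      (ν - w) * K + (ν ^ 2 - w * ν) * K := by
  -- In characteristic `3` the factor `1 + 2 * ν = 1 - ν` divides `1 - ν ^ 3`, which `K` inverts.
  have hsolve : g = (1 - w) * (1 + ν + ν ^ 2) * K := by
    linear_combination (1 + ν + ν ^ 2) * K * h - g * one_sub_dissectionRatio_cube_mul +
      ((1 + ν + ν ^ 2) * K * w - (1 + ν + ν ^ 2) * K * g * ν) * three_eq_zero
  linear_combination hsolve + expand_three_dissectionFactorInv_eq_sub_sq -
    w * dissectionRatio_sq_mul_expand_three_dissectionFactorInv -
    V[9] θ * V[27] θ * V[3] H * three_eq_zero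

theorem three_dvd_Rbar_four_nine {n : ℕ} (hn : n % 18 = 15) : 3 ∣ Rbar 4 9 n := by
  have hν : SupportedMod 3 1 ν := supportedMod_dissectionRatio (ZMod 3)
  have hw : SupportedMod 3 1 (V[4] ν) := (hν.expand _).of_dvd (by decide)
  have hw₂ : SupportedMod 2 0 (V[4] ν) := (supportedMod_expand _ _).of_dvd (by decide)
  have hK : SupportedMod 3 0 K := supportedMod_expand _ _
  have hA : SupportedMod 9 0 (V[9] θ * V[27] θ) :=
    (supportedMod_expand _ _).mul ((supportedMod_expand _ _).of_dvd (by decide))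
  have hH : SupportedMod 2 1 H := supportedMod_two_mixedTheta (ZMod 3)
  have hH₃ : SupportedMod 9 3 (V[3] H) := (supportedMod_three_mixedTheta (ZMod 3)).expand _
  have hH₃' : SupportedMod 2 3 (V[3] H) := (hH.expand _).of_dvd (by decide)
  rw [← ZMod.natCast_eq_zero_iff, ← coeff_regularOverpartitionSeries,
    eq_of_mul_one_add_two_mul_dissectionRatio
      (regularOverpartitionSeries_nine_mul (ZMod 3) (NeZero.ne 4) (by decide))]
  simp only [map_add, map_sub]
  rw [(hA.pow 2).coeff_eq_zero (by lia), (hA.mul hH₃).coeff_eq_zero (by lia),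
    (hH₃'.pow 2).coeff_eq_zero (by lia), (hw₂.mul (hH.pow 2)).coeff_eq_zero (by lia),
    ((hν.sub hw).mul hK).coeff_eq_zero (by lia),
    (((hν.pow 2).sub (hw.mul hν)).mul hK).coeff_eq_zero (by lia)]
  simp only [add_zero, sub_zero]

end ModThree

end Overpartition

theorem Rbar_four_nine_18n_15_mod_48 (n : ℕ) :
    Rbar 4 9 (18 * n + 15) ≡ 0 [MOD 48] := by
  have hmod : (18 * n + 15) % 18 = 15 := by lia
  exact Nat.modEq_zero_iff_dvd.mpr <|
    Nat.Coprime.mul_dvd_of_dvd_of_dvd (by decide)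
      (Overpartition.sixteen_dvd_Rbar_four_nine hmod) (Overpartition.three_dvd_Rbar_four_nine hmod)
end
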